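/- arXiv:2404.09175 — 2 statements merged into one kernel-verified Lean document; each statement's English description precedes it below -/
import Mathlib

section
/- Suppose Γ is additively closed and π and all elements of Γ are algebraic over K. Then for every x ∈ K_v that is algebraic over K, the digit sequence of the expansion of x with respect to (Γ, π) is p-automatic. -/
/-!
Common setup: `Kv` is a complete field equipped with a (normalized, `ℤ`-valued)
valuation `Valued.v : Kv → ℤₘ₀ = WithZero (Multiplicative ℤ)`, and `K` is a dense
subfield of `Kv` (so that `Kv` is the completion `K_v` of `K`).  The valuation is
written multiplicatively: the additive valuation of `x` is `n` iff
`Valued.v x = ofAdd (-n)`; the valuation ring `A_v` is `{x | Valued.v x ≤ 1}` and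
`π A_v = {x | Valued.v x ≤ Valued.v π}`.
-/

open scoped Multiplicative

/-- The multiplicative value monoid `ℤₘ₀` for normalized `ℤ`-valued valuations. -/
abbrev ZM0 : Type := WithZero (Multiplicative ℤ)

/-- A sequence `b : ℕ → α` is `k`-automatic if its `k`-kernel
`{ (b (n k^i + j))_n : i ≥ 0, 0 ≤ j < k^i }` is finite. -/
def IsKAutomatic {α : Type*} (k : ℕ) (b : ℕ → α) : Prop :=
  {c : ℕ → α | ∃ i j : ℕ, j < k ^ i ∧ c = fun n => b (n * k ^ i + j)}.Finite

/-- The sequence `{a n}_{n ≥ m}` is ultimately periodic: there are `N ≥ m` and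
`L > 0` with `a (n + L) = a n` for all `n ≥ N`. -/
def UltimatelyPeriodic {α : Type*} (m : ℤ) (a : ℤ → α) : Prop :=
  ∃ N L : ℤ, m ≤ N ∧ 0 < L ∧ ∀ n : ℤ, N ≤ n → a (n + L) = a n

variable {Kv : Type*} [Field Kv] [Valued Kv ZM0]

/-- `x = ∑_{n ≥ m} a_n π^n` is the expansion of `x` with respect to `(Γ, π)`:
all digits `a n` for `n ≥ m` lie in `Γ` and the series converges to `x`. -/
def IsExpansion (π : Kv) (Γ : Set Kv) (m : ℤ) (a : ℤ → Kv) (x : Kv) : Prop :=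
  (∀ n : ℤ, m ≤ n → a n ∈ Γ) ∧
    HasSum (fun n : ℕ => a (m + n) * π ^ (m + (n : ℤ))) x

/-- `Γ ⊆ A_v` is a complete set of representatives of `A_v / π A_v`: reduction
modulo `π A_v` maps `Γ` bijectively onto `A_v / π A_v`. -/
def IsCompleteSetOfReps (π : Kv) (Γ : Set Kv) : Prop :=
  (∀ γ ∈ Γ, Valued.v γ ≤ 1) ∧
    ∀ x : Kv, Valued.v x ≤ 1 → ∃! γ, γ ∈ Γ ∧ Valued.v (x - γ) ≤ Valued.v π

/-- `(Γ, π)` has property A: for every `x ∈ K_v`, `x` is rational (i.e. `x ∈ K`)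
iff the digit sequence of the expansion of `x` w.r.t. `(Γ, π)` is ultimately
periodic. -/
def HasPropertyA (K : Subfield Kv) (π : Kv) (Γ : Set Kv) : Prop :=
  ∀ (x : Kv) (m : ℤ) (a : ℤ → Kv), IsExpansion π Γ m a x →
    (x ∈ K ↔ UltimatelyPeriodic m a)

/-- `(Γ, π)` has property B: for every `x ∈ K_v`, `x` is algebraic over `K` iff
the digit sequence of the expansion of `x` w.r.t. `(Γ, π)` is `p`-automatic. -/
def HasPropertyB (p : ℕ) (K : Subfield Kv) (π : Kv) (Γ : Set Kv) : Prop :=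
  ∀ (x : Kv) (m : ℤ) (a : ℤ → Kv), IsExpansion π Γ m a x →
    (IsAlgebraic ↥K x ↔ IsKAutomatic p fun n : ℕ => a (m + n))

/-- The degree `[S : F]` of a subset `S ⊆ Kv` over a subfield `F ⊆ Kv` (intended
for `F ⊆ S` with `S` a field): the rank of the `F`-span of `S` in `Kv`. -/
noncomputable def degOver (F : Subfield Kv) (S : Set Kv) : Cardinal :=
  Module.rank ↥F ↥(Submodule.span ↥F S)

/-- `Kv` is the completion of a global function field `K` of characteristic `p`
with respect to a normalized nontrivial valuation:  `Kv` has characteristic `p`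
and is complete, `K` is dense in `Kv`, the valuation takes every value `ofAdd n`
(`n ∈ ℤ`) on `K` (normalization/nontriviality), and `K` contains an element `x₀`
transcendental over the prime field `𝔽_p = ⊥` with `[K : 𝔽_p(x₀)] < ∞`. -/
structure IsGlobalFunctionFieldCompletion (p : ℕ) (K : Subfield Kv) : Prop where
  charP : CharP Kv p
  complete : CompleteSpace Kv
  dense : Dense (K : Set Kv)
  normalized : ∀ n : ℤ, ∃ x ∈ K,
    Valued.v x = ((Multiplicative.ofAdd n : Multiplicative ℤ) : ZM0)
  globalFunctionField : ∃ x₀ ∈ K, Transcendental (⊥ : Subfield Kv) x₀ ∧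
    degOver (Subfield.closure {x₀}) (K : Set Kv) < Cardinal.aleph0

/-- The constant field `𝔽_q` of `K`: the algebraic closure of `𝔽_p` in `K`,
i.e. the elements of `K` fixed by some positive power of the Frobenius. -/
def ConstantField (p : ℕ) (K : Subfield Kv) : Set Kv :=
  {x : Kv | x ∈ K ∧ ∃ n : ℕ, 0 < n ∧ x ^ p ^ n = x}

/-- The subfield `𝔽_q(π)` of `Kv` generated by `π` over the constant field. -/
def FqPi (p : ℕ) (K : Subfield Kv) (π : Kv) : Subfield Kv :=
  Subfield.closure (ConstantField p K ∪ {π})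

/-- `𝔽_q((π))`: the completion of `𝔽_q(π)`, i.e. its closure in `Kv`. -/
noncomputable def FqPiCompletion (p : ℕ) (K : Subfield Kv) (π : Kv) : Subfield Kv :=
  (FqPi p K π).topologicalClosure

/-!
Let `R = 𝔽_p⟦X⟧`. Evaluation at `π` makes `K_v` an `R`-algebra, and elements of `A_v` that are
independent over `𝔽_p` modulo `π A_v` are independent over `R`. Being additively closed, `Γ` is an
`𝔽_p`-subspace of `K_v`; approximating a basis of `Γ` by elements of `K`, which has finite degree
over `𝔽_p(x₀)`, shows that `Γ` has a finite basis `γ₁, …, γ_d`. Splitting the digits of `x` into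
coordinates gives `x π⁻ᵐ = ∑ᵢ fᵢ(π) γᵢ` with `fᵢ ∈ R`. Here `π` is transcendental over `𝔽_p`, so by
exchange `x₀`, and with it `x π⁻ᵐ` and all `γᵢ`, are algebraic over `𝔽_p(π)`.

The elements `1, X, …, X^(p-1)` form a basis over the `p`-th powers in `𝔽_p(X)`, in `Frac R`, and
in the algebraic closure `E` of `𝔽_p(X)` in `Frac R`. Hence `E`-independent elements of `Frac R`
have `E`-independent `p`-th powers, which makes `Frac R` linearly disjoint over `E` from algebraic
extensions. So every `fᵢ` lies in `E`, and Christol's argument applies to it: for a suitable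
polynomial `a`, the quotient `g = fᵢ / a` is a polynomial combination of `g^p, g^(p²), …`, and the
Cartier operators preserve the finite set of combinations of bounded degree.
-/

open Polynomial IntermediateField
open scoped PowerSeries

section FrobeniusBasis

variable {p : ℕ}

/-- The element of `B` with coordinates `c` in the family `1, t, …, t ^ (p - 1)`, where `B` is
regarded as a module over its subring of `p`-th powers. The coordinates are given by their `p`-th
roots, so that no mention of the subring is necessary. -/
def frobeniusSum {B : Type*} [CommRing B] (t : B) (c : Fin p → B) : B :=
  ∑ k : Fin p, t ^ (k : ℕ) * c k ^ p

theorem map_frobeniusSum {B B' : Type*} [CommRing B] [CommRing B'] (φ : B →+* B') (t : B)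
    (c : Fin p → B) : φ (frobeniusSum t c) = frobeniusSum (φ t) fun k => φ (c k) := by
  simp only [frobeniusSum, map_sum, map_mul, map_pow]

theorem frobeniusSum_sum_mul [Fact p.Prime] {B ι : Type*} [CommRing B] [CharP B p] (t : B)
    (s : Finset ι) (z : ι → B) (c : ι → Fin p → B) :
    frobeniusSum t (fun k => ∑ i ∈ s, z i * c i k) = ∑ i ∈ s, z i ^ p * frobeniusSum t (c i) := by
  simp only [frobeniusSum, sum_pow_char p, mul_pow, Finset.mul_sum, mul_left_comm]
  exact Finset.sum_comm

theorem frobeniusSum_injective_iff [Fact p.Prime] {B : Type*} [CommRing B] [CharP B p] {t : B} :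
    Function.Injective (frobeniusSum (p := p) t) ↔
      ∀ c : Fin p → B, frobeniusSum t c = 0 → c = 0 := by
  let φ : (Fin p → B) →+ B :=
    { toFun := frobeniusSum t
      map_zero' := by simp [frobeniusSum, (Fact.out : p.Prime).ne_zero]
      map_add' := fun c d => by
        simp only [frobeniusSum, Pi.add_apply, add_pow_char, mul_add, Finset.sum_add_distrib] }
  exact injective_iff_map_eq_zero φ

theorem linearIndependent_pow_char [Fact p.Prime] {E F ι : Type*} [Field E] [Field F]
    [CharP F p] [Algebra E F] {t : E} (htE : Function.Surjective (frobeniusSum (p := p) t))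
    (htF : Function.Injective (frobeniusSum (p := p) (algebraMap E F t)))
    {u : ι → F} (hu : LinearIndependent E u) : LinearIndependent E fun i => u i ^ p := by
  rw [linearIndependent_iff'] at hu ⊢
  intro s e he i hi
  choose d hd using fun i => htE (e i)
  have grouped : frobeniusSum (algebraMap E F t) (fun k : Fin p => ∑ i ∈ s, d i k • u i) = 0 := by
    simp only [Algebra.smul_def, mul_comm _ (u _)]
    rw [frobeniusSum_sum_mul, ← he]
    simp only [← map_frobeniusSum, hd, Algebra.smul_def, mul_comm]
  have hcoord := frobeniusSum_injective_iff.1 htF _ grouped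
  have hd0 : d i = 0 := funext fun k => hu s (d · k) (congrFun hcoord k) i hi
  rw [← hd i, hd0]
  simp [frobeniusSum, (Fact.out : p.Prime).ne_zero]

/-- `1, t, …, t ^ (p - 1)` is a basis of `B` over its subring of `p`-th powers. -/
def IsFrobeniusBasis (p : ℕ) {B : Type*} [CommRing B] (t : B) : Prop :=
  Function.Bijective (frobeniusSum (p := p) t)

theorem linearIndependent_pow_char_pow [Fact p.Prime] {E F ι : Type*} [Field E] [Field F]
    [CharP F p] [Algebra E F] {t : E} (htE : IsFrobeniusBasis p t)
    (htF : IsFrobeniusBasis p (algebraMap E F t)) {u : ι → F} (hu : LinearIndependent E u) (n : ℕ) :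
    LinearIndependent E fun i => u i ^ p ^ n := by
  induction n with
  | zero => simpa using hu
  | succ n ih =>
    simpa only [pow_succ, pow_mul] using linearIndependent_pow_char htE.2 htF.1 ih

namespace IsFrobeniusBasis

variable {B B' : Type*} [CommRing B] [CommRing B'] {t : B} {t' : B'}

/-- The coordinates of `b` in a Frobenius basis; for power series these are the Cartier
operators. -/
noncomputable def coord (ht : IsFrobeniusBasis p t) (b : B) : Fin p → B :=
  (Equiv.ofBijective _ ht).symm b

theorem frobeniusSum_coord (ht : IsFrobeniusBasis p t) (b : B) :
    frobeniusSum t (ht.coord b) = b :=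
  (Equiv.ofBijective _ ht).apply_symm_apply b

theorem coord_frobeniusSum (ht : IsFrobeniusBasis p t) (c : Fin p → B) :
    ht.coord (frobeniusSum t c) = c :=
  (Equiv.ofBijective _ ht).symm_apply_apply c

theorem map_coord (ht : IsFrobeniusBasis p t) (ht' : IsFrobeniusBasis p t') (φ : B →+* B')
    (hφ : φ t = t') (b : B) (k : Fin p) : φ (ht.coord b k) = ht'.coord (φ b) k := by
  conv_rhs => rw [← ht.frobeniusSum_coord b, map_frobeniusSum, hφ, ht'.coord_frobeniusSum]

variable [Fact p.Prime]

theorem coord_sum_pow_mul [CharP B p] (ht : IsFrobeniusBasis p t) {ι : Type*} (s : Finset ι)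
    (z y : ι → B) (k : Fin p) :
    ht.coord (∑ i ∈ s, z i ^ p * y i) k = ∑ i ∈ s, z i * ht.coord (y i) k := by
  have sum_eq := frobeniusSum_sum_mul t s z fun i => ht.coord (y i)
  simp only [ht.frobeniusSum_coord] at sum_eq
  rw [← sum_eq, ht.coord_frobeniusSum]

section FractionField

variable {A Q : Type*} [CommRing A] [IsDomain A] [Field Q] [Algebra A Q] [IsFractionRing A Q]
  {t : A}

theorem frobeniusSum_algebraMap_injective [CharP Q p] (ht : IsFrobeniusBasis p t) :
    Function.Injective (frobeniusSum (p := p) (algebraMap A Q t)) := by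
  have hinj := IsFractionRing.injective A Q
  have : CharP A p := (algebraMap A Q).charP hinj p
  refine frobeniusSum_injective_iff.2 fun c hc => ?_
  obtain ⟨⟨b, hb⟩, hbc⟩ := IsLocalization.exist_integer_multiples_of_finite (nonZeroDivisors A) c
  choose d hd using hbc
  have hd0 : frobeniusSum t d = 0 := hinj <| by
    have scaled := frobeniusSum_sum_mul (algebraMap A Q t) {()} (fun _ => algebraMap A Q b)
      (fun _ => c)
    simp only [Finset.sum_singleton, hc, mul_zero] at scaled
    simpa only [map_frobeniusSum, hd, Algebra.smul_def, map_zero] using scaled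
  funext k
  have hk := hd k
  rw [frobeniusSum_injective_iff.1 ht.1 d hd0, Pi.zero_apply, map_zero, eq_comm,
    Algebra.smul_def] at hk
  exact (mul_eq_zero.1 hk).resolve_left (IsFractionRing.to_map_ne_zero_of_mem_nonZeroDivisors hb)

theorem frobeniusSum_algebraMap_surjective (ht : IsFrobeniusBasis p t) :
    Function.Surjective (frobeniusSum (p := p) (algebraMap A Q t)) := by
  intro q
  obtain ⟨a, b, hb, rfl⟩ := IsFractionRing.div_surjective A q
  have hb0 : algebraMap A Q b ≠ 0 := IsFractionRing.to_map_ne_zero_of_mem_nonZeroDivisors hb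
  refine ⟨fun k => algebraMap A Q (ht.coord (a * b ^ (p - 1)) k) / algebraMap A Q b, ?_⟩
  calc frobeniusSum (algebraMap A Q t)
          (fun k => algebraMap A Q (ht.coord (a * b ^ (p - 1)) k) / algebraMap A Q b)
      = algebraMap A Q (frobeniusSum t (ht.coord (a * b ^ (p - 1)))) / algebraMap A Q b ^ p := by
        rw [map_frobeniusSum]
        simp only [frobeniusSum, div_pow, Finset.sum_div, mul_div_assoc]
    _ = algebraMap A Q a / algebraMap A Q b := by
        rw [ht.frobeniusSum_coord, map_mul, map_pow,
          ← mul_pow_sub_one (Fact.out : p.Prime).ne_zero (algebraMap A Q b),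
          mul_div_mul_right _ _ (pow_ne_zero _ hb0)]

theorem algebraMap_fractionRing [CharP Q p] (ht : IsFrobeniusBasis p t) :
    IsFrobeniusBasis p (algebraMap A Q t) :=
  ⟨ht.frobeniusSum_algebraMap_injective, ht.frobeniusSum_algebraMap_surjective⟩

end FractionField

theorem algebraMap_of_isAlgebraic {k E F : Type*} [Field k] [Field E] [Field F] [Algebra k E]
    [Algebra k F] [Algebra E F] [IsScalarTower k E F] [CharP F p] [Algebra.IsAlgebraic k E] {t : k}
    (htk : IsFrobeniusBasis p t) (htF : IsFrobeniusBasis p (algebraMap k F t)) :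
    IsFrobeniusBasis p (algebraMap k E t) := by
  have : CharP E p := (algebraMap E F).charP (algebraMap E F).injective p
  have inj : Function.Injective (frobeniusSum (p := p) (algebraMap k E t)) := fun c d hcd => by
    have := congrArg (algebraMap E F) hcd
    simp only [map_frobeniusSum, ← IsScalarTower.algebraMap_apply] at this
    exact funext fun j => (algebraMap E F).injective (congrFun (htF.1 this) j)
  refine ⟨inj, fun e => ?_⟩
  have : FiniteDimensional k k⟮e⟯ :=
    adjoin.finiteDimensional (Algebra.IsAlgebraic.isAlgebraic e).isIntegral
  let b := Module.finBasis k k⟮e⟯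
  -- By dimension, the `p`-th powers of a basis of `k⟮e⟯` again form a basis.
  have hbE : LinearIndependent k fun i => (b i : E) ^ p :=
    linearIndependent_pow_char htk.2 inj (b.linearIndependent.map' k⟮e⟯.val.toLinearMap
      (LinearMap.ker_eq_bot.2 k⟮e⟯.val.injective))
  have hb : LinearIndependent k fun i => b i ^ p :=
    LinearIndependent.of_comp k⟮e⟯.val.toLinearMap (by simpa [Function.comp_def] using hbE)
  have gen_mem : AdjoinSimple.gen k e ∈ Submodule.span k (Set.range fun i => b i ^ p) := by
    rw [hb.span_eq_top_of_card_eq_finrank' (by simp)]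
    trivial
  obtain ⟨r, hr⟩ := (Submodule.mem_span_range_iff_exists_fun k).1 gen_mem
  refine ⟨fun j => ∑ i, (b i : E) * algebraMap k E (htk.coord (r i) j), ?_⟩
  calc frobeniusSum (algebraMap k E t)
          (fun j => ∑ i, (b i : E) * algebraMap k E (htk.coord (r i) j))
      = ((∑ i, r i • b i ^ p : k⟮e⟯) : E) := by
        rw [frobeniusSum_sum_mul]
        simp only [← map_frobeniusSum, htk.frobeniusSum_coord]
        simp [Algebra.smul_def, mul_comm]
    _ = e := by rw [hr, AdjoinSimple.coe_gen]

end IsFrobeniusBasis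

end FrobeniusBasis

section LinearDisjoint

variable {E F Ω : Type*} [Field E] [Field F] [Field Ω] [Algebra E F] [Algebra F Ω] [Algebra E Ω]
  [IsScalarTower E F Ω] [IsIntegrallyClosedIn E F]

theorem minpoly_mem_lifts_of_isIntegrallyClosedIn {a : Ω} (ha : IsIntegral E a) :
    minpoly F a ∈ Polynomial.lifts (algebraMap E F) := by
  obtain ⟨q, hq⟩ := integralClosure.mem_lifts_of_monic_of_dvd_map F (minpoly.monic ha)
    (minpoly.monic ha.tower_top) (minpoly.dvd_map_of_isScalarTower E F a)
  refine (Polynomial.lifts_iff_coeff_lifts _).2 fun n => ?_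
  have coeff_integral : IsIntegral E ((minpoly F a).coeff n) := by
    rw [← hq, coe_mapRingHom, Polynomial.coeff_map]
    exact (q.coeff n).2
  exact IsIntegrallyClosedIn.algebraMap_eq_of_integral coeff_integral

theorem minpoly_eq_map_of_isIntegrallyClosedIn {a : Ω} (ha : IsIntegral E a) :
    minpoly F a = (minpoly E a).map (algebraMap E F) := by
  have haF : IsIntegral F a := ha.tower_top
  obtain ⟨r, hr, -, -⟩ := Polynomial.lifts_and_natDegree_eq_and_monic
    (minpoly_mem_lifts_of_isIntegrallyClosedIn (F := F) ha) (minpoly.monic haF)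
  have hra : Polynomial.aeval a r = 0 := by
    rw [← Polynomial.aeval_map_algebraMap F, hr, minpoly.aeval]
  refine Polynomial.eq_of_monic_of_associated (minpoly.monic haF) ((minpoly.monic ha).map _)
    (associated_of_dvd_dvd (minpoly.dvd_map_of_isScalarTower E F a) ?_)
  rw [← hr]
  exact Polynomial.map_dvd _ (minpoly.dvd E a hra)

theorem linearDisjoint_of_isSeparable (A : IntermediateField E Ω) [FiniteDimensional E A]
    [Algebra.IsSeparable E A] : A.LinearDisjoint F := by
  let pb := Field.powerBasisOfFiniteOfSeparable E A
  have hint : IsIntegral E (pb.gen : Ω) := (IsIntegral.of_finite E pb.gen).algebraMap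
  have hdim : (minpoly F (pb.gen : Ω)).natDegree = pb.dim := by
    rw [minpoly_eq_map_of_isIntegrallyClosedIn hint, Polynomial.natDegree_map,
      ← pb.natDegree_minpoly, ← minpoly.algebraMap_eq (algebraMap A Ω).injective pb.gen]
    rfl
  refine LinearDisjoint.of_basis_left pb.basis ?_
  have hpow := linearIndependent_pow (K := F) (pb.gen : Ω)
  rw [hdim] at hpow
  convert hpow using 1
  funext i
  simp

variable {p : ℕ} [Fact p.Prime]

theorem exists_isSeparable_pow [CharP E p] {y : Ω} (hy : IsIntegral E y) :
    ∃ n, IsSeparable E (y ^ p ^ n) := by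
  have : ExpChar E p := ExpChar.prime Fact.out
  obtain ⟨g, hg, n, hgy⟩ := (minpoly.irreducible hy).hasSeparableContraction p
  refine ⟨n, hg.of_dvd (minpoly.dvd E _ ?_)⟩
  rw [← Polynomial.expand_aeval, hgy, minpoly.aeval]

theorem exists_isSeparable_pow_finset [CharP E p] {ι : Type*} (s : Finset ι) {y : ι → Ω}
    (hy : ∀ i, IsIntegral E (y i)) : ∃ n, ∀ i ∈ s, IsSeparable E (y i ^ p ^ n) := by
  choose n hn using fun i => exists_isSeparable_pow (p := p) (hy i)
  refine ⟨s.sup n, fun i hi => ?_⟩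
  obtain ⟨k, hk⟩ := Nat.exists_eq_add_of_le (Finset.le_sup (f := n) hi)
  rw [hk, pow_add, pow_mul, ← mem_separableClosure_iff]
  exact pow_mem (mem_separableClosure_iff.2 (hn i)) _

theorem eq_zero_of_sum_mul_eq_zero_of_isSeparable {ι : Type*} {u : ι → F}
    (hu : LinearIndependent E u) {s : Finset ι} {a : ι → Ω} (ha : ∀ i ∈ s, IsSeparable E (a i))
    (hsum : ∑ i ∈ s, a i * algebraMap F Ω (u i) = 0) : ∀ i ∈ s, a i = 0 := by
  let A : IntermediateField E Ω := adjoin E (a '' s)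
  have : FiniteDimensional E A := by
    have : Finite (a '' s) := (s.finite_toSet.image _).to_subtype
    refine finiteDimensional_adjoin ?_
    rintro _ ⟨i, hi, rfl⟩
    exact (ha i hi).isIntegral
  have : Algebra.IsSeparable E A := by
    rw [isSeparable_adjoin_iff_isSeparable]
    rintro _ ⟨i, hi, rfl⟩
    exact ha i hi
  have huA : LinearIndependent A fun i : s => algebraMap F Ω (u i) :=
    ((linearDisjoint_of_isSeparable A).linearIndependent_right' hu).comp _ Subtype.val_injective
  let a' : s → A := fun i => ⟨a i, subset_adjoin E _ ⟨i, i.2, rfl⟩⟩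
  have ha' : ∑ i : s, a' i • algebraMap F Ω (u i) = 0 :=
    (Finset.sum_coe_sort s fun i => a i * algebraMap F Ω (u i)).trans hsum
  exact fun i hi => congrArg Subtype.val (Fintype.linearIndependent_iff.1 huA a' ha' ⟨i, hi⟩)

theorem linearDisjoint_of_isFrobeniusBasis [CharP Ω p] {t : E} (htE : IsFrobeniusBasis p t)
    (htF : IsFrobeniusBasis p (algebraMap E F t)) (A : IntermediateField E Ω)
    [Algebra.IsAlgebraic E A] : A.LinearDisjoint F := by
  have : CharP F p := (algebraMap F Ω).charP (algebraMap F Ω).injective p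
  have : CharP E p := (algebraMap E F).charP (algebraMap E F).injective p
  let b := Module.Basis.ofVectorSpace E F
  refine LinearDisjoint.of_basis_right' b (linearIndependent_iff'.2 fun s a hsum i hi => ?_)
  have hint : ∀ i, IsIntegral E (a i : Ω) := fun i =>
    (Algebra.IsIntegral.isIntegral (R := E) (a i)).algebraMap
  -- Raising the relation to a large power of `p` makes its coefficients separable over `E`.
  obtain ⟨n, hn⟩ := exists_isSeparable_pow_finset (p := p) s hint
  have hpn : p ^ n ≠ 0 := pow_ne_zero n (Fact.out : p.Prime).ne_zero
  have hsum_pow : ∑ i ∈ s, (a i : Ω) ^ p ^ n * algebraMap F Ω (b i ^ p ^ n) = 0 := by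
    have := congrArg (· ^ p ^ n) hsum
    simpa only [sum_pow_char_pow, zero_pow hpn, IntermediateField.smul_def, Function.comp_apply,
      smul_eq_mul, mul_pow, ← map_pow] using this
  have hb := linearIndependent_pow_char_pow htE htF b.linearIndependent n
  exact Subtype.ext ((pow_eq_zero_iff hpn).1
    (eq_zero_of_sum_mul_eq_zero_of_isSeparable hb hn hsum_pow i hi))

theorem mem_span_of_mem_span_of_isFrobeniusBasis [CharP Ω p] {t : E} (htE : IsFrobeniusBasis p t)
    (htF : IsFrobeniusBasis p (algebraMap E F t)) {ι : Type*} {γ : ι → Ω}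
    (hγ : LinearIndependent F γ) (hγalg : ∀ i, IsAlgebraic E (γ i)) {x : Ω} (hx : IsAlgebraic E x)
    (hx_mem : x ∈ Submodule.span F (Set.range γ)) : x ∈ Submodule.span E (Set.range γ) := by
  by_contra hx_notMem
  let y : Option ι → algebraicClosure E Ω := fun o =>
    o.casesOn' ⟨x, mem_algebraicClosure_iff.2 hx⟩ fun i =>
      ⟨γ i, mem_algebraicClosure_iff.2 (hγalg i)⟩
  have hy : (algebraicClosure E Ω).val ∘ y = fun o => o.casesOn' x γ := by
    funext o
    cases o <;> rfl
  have hyE : LinearIndependent E y := by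
    refine LinearIndependent.of_comp (algebraicClosure E Ω).val.toLinearMap ?_
    change LinearIndependent E ((algebraicClosure E Ω).val ∘ y)
    rw [hy]
    exact linearIndependent_option'.2 ⟨hγ.restrict_scalars' E, hx_notMem⟩
  have hyF := (linearDisjoint_of_isFrobeniusBasis htE htF
    (algebraicClosure E Ω)).linearIndependent_left hyE
  rw [hy] at hyF
  exact (linearIndependent_option'.1 hyF).2 hx_mem

theorem mem_range_algebraMap_of_isAlgebraic_sum [CharP Ω p] {t : E} (htE : IsFrobeniusBasis p t)
    (htF : IsFrobeniusBasis p (algebraMap E F t)) {ι : Type*} [Fintype ι] {γ : ι → Ω}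
    (hγ : LinearIndependent F γ) (hγalg : ∀ i, IsAlgebraic E (γ i)) {f : ι → F}
    (hf : IsAlgebraic E (∑ i, f i • γ i)) (i : ι) : f i ∈ Set.range (algebraMap E F) := by
  have hmem := mem_span_of_mem_span_of_isFrobeniusBasis htE htF hγ hγalg hf
    (Submodule.sum_mem _ fun i _ => Submodule.smul_mem _ _ (Submodule.subset_span ⟨i, rfl⟩))
  obtain ⟨c, hc⟩ := (Submodule.mem_span_range_iff_exists_fun E).1 hmem
  have hdiff : ∑ i, (algebraMap E F (c i) - f i) • γ i = 0 := by
    simp only [sub_smul, Finset.sum_sub_distrib, algebraMap_smul, hc, sub_self]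
  exact ⟨c i, sub_eq_zero.1 (Fintype.linearIndependent_iff.1 hγ _ hdiff i)⟩

end LinearDisjoint

section CartierOperators

variable {p : ℕ} [Fact p.Prime]

theorem zmod_powerSeries_pow_char (f : (ZMod p)⟦X⟧) :
    f ^ p = f.expand p (Fact.out : p.Prime).ne_zero := by
  have h := MvPowerSeries.map_frobenius_expand p (Fact.out : p.Prime).ne_zero (f := f)
  rw [ZMod.frobenius_zmod, MvPowerSeries.map_id] at h
  exact h.symm

theorem coeff_frobeniusSum_X (c : Fin p → (ZMod p)⟦X⟧) (n : ℕ) (l : Fin p) :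
    PowerSeries.coeff (n * p + l) (frobeniusSum PowerSeries.X c) = PowerSeries.coeff n (c l) := by
  rw [frobeniusSum, map_sum, Finset.sum_eq_single l]
  · rw [PowerSeries.coeff_X_pow_mul, zmod_powerSeries_pow_char, mul_comm,
      PowerSeries.coeff_expand_mul]
  · intro k _ hkl
    rw [PowerSeries.coeff_X_pow_mul', zmod_powerSeries_pow_char, PowerSeries.coeff_expand]
    split_ifs with hk hdvd
    · refine absurd (Fin.ext ?_) hkl
      obtain ⟨m, hm⟩ := hdvd
      have : p * m + k = p * n + l := by lia
      simpa [Nat.mul_add_mod, Nat.mod_eq_of_lt k.2, Nat.mod_eq_of_lt l.2] using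
        congrArg (· % p) this
    all_goals rfl
  · simp

theorem powerSeries_ext_frobenius {f g : (ZMod p)⟦X⟧}
    (h : ∀ n (l : Fin p), PowerSeries.coeff (n * p + l) f = PowerSeries.coeff (n * p + l) g) :
    f = g := by
  ext d
  have := h (d / p) ⟨d % p, Nat.mod_lt _ (Fact.out : p.Prime).pos⟩
  rwa [Nat.div_add_mod'] at this

theorem isFrobeniusBasis_powerSeries_X : IsFrobeniusBasis p (PowerSeries.X : (ZMod p)⟦X⟧) := by
  constructor
  · intro c d hcd
    funext l
    ext n
    rw [← coeff_frobeniusSum_X c, ← coeff_frobeniusSum_X d, hcd]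
  · intro f
    refine ⟨fun l => PowerSeries.mk fun n => PowerSeries.coeff (n * p + l) f,
      powerSeries_ext_frobenius fun n l => ?_⟩
    rw [coeff_frobeniusSum_X, PowerSeries.coeff_mk]

theorem coeff_coord_powerSeries (f : (ZMod p)⟦X⟧) (n : ℕ) (l : Fin p) :
    PowerSeries.coeff n (isFrobeniusBasis_powerSeries_X.coord f l) =
      PowerSeries.coeff (n * p + l) f := by
  rw [← coeff_frobeniusSum_X, isFrobeniusBasis_powerSeries_X.frobeniusSum_coord]

theorem exists_frobeniusSum_polynomial_X_eq (D : (ZMod p)[X]) :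
    ∃ c : Fin p → (ZMod p)[X], frobeniusSum Polynomial.X c = D ∧
      ∀ l, (c l).natDegree ≤ D.natDegree / p := by
  refine ⟨fun l => PowerSeries.trunc (D.natDegree / p + 1)
      (isFrobeniusBasis_powerSeries_X.coord (D : (ZMod p)⟦X⟧) l),
    Polynomial.coe_injective _ (powerSeries_ext_frobenius fun n l => ?_), fun l =>
    Nat.le_of_lt_succ (PowerSeries.natDegree_trunc_lt _ _)⟩
  rw [← coeToPowerSeries.ringHom_apply, map_frobeniusSum]
  simp only [coeToPowerSeries.ringHom_apply, Polynomial.coe_X]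
  rw [coeff_frobeniusSum_X, Polynomial.coeff_coe, PowerSeries.coeff_trunc, coeff_coord_powerSeries]
  split_ifs with hn
  · rfl
  · rw [Polynomial.coeff_coe, Polynomial.coeff_eq_zero_of_natDegree_lt]
    have := (Nat.div_lt_iff_lt_mul (Fact.out : p.Prime).pos).1 (Nat.lt_of_succ_le (not_lt.1 hn))
    lia

theorem isFrobeniusBasis_polynomial_X : IsFrobeniusBasis p (Polynomial.X : (ZMod p)[X]) := by
  refine ⟨fun c d hcd => ?_, fun D => (exists_frobeniusSum_polynomial_X_eq D).imp fun _ h => h.1⟩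
  have := congrArg coeToPowerSeries.ringHom hcd
  simp only [map_frobeniusSum, coeToPowerSeries.ringHom_apply, Polynomial.coe_X] at this
  exact funext fun l =>
    Polynomial.coe_injective _ (congrFun (isFrobeniusBasis_powerSeries_X.1 this) l)

theorem natDegree_coord_polynomial_le (D : (ZMod p)[X]) (l : Fin p) :
    (isFrobeniusBasis_polynomial_X.coord D l).natDegree ≤ D.natDegree / p := by
  obtain ⟨c, hc, hdeg⟩ := exists_frobeniusSum_polynomial_X_eq D
  rw [← hc, isFrobeniusBasis_polynomial_X.coord_frobeniusSum, hc]
  exact hdeg l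

theorem isKAutomatic_coeff_of_coord_mem {S : Set (ZMod p)⟦X⟧} (hS : S.Finite)
    (hcoord : ∀ f ∈ S, ∀ l, isFrobeniusBasis_powerSeries_X.coord f l ∈ S) {f : (ZMod p)⟦X⟧}
    (hf : f ∈ S) : IsKAutomatic p fun n => PowerSeries.coeff n f := by
  have kernel : ∀ i j, j < p ^ i →
      ∃ g ∈ S, ∀ n, PowerSeries.coeff n g = PowerSeries.coeff (n * p ^ i + j) f := by
    intro i
    induction i with
    | zero =>
      intro j hj
      obtain rfl : j = 0 := by simpa using hj
      exact ⟨f, hf, by simp⟩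
    | succ i ih =>
      intro j hj
      have hpi : 0 < p ^ i := pow_pos (Fact.out : p.Prime).pos _
      obtain ⟨g, hgS, hg⟩ := ih (j % p ^ i) (Nat.mod_lt _ hpi)
      have hl : j / p ^ i < p := by rwa [Nat.div_lt_iff_lt_mul hpi, ← pow_succ']
      refine ⟨_, hcoord g hgS ⟨j / p ^ i, hl⟩, fun n => ?_⟩
      have hindex : (n * p + j / p ^ i) * p ^ i + j % p ^ i = n * p ^ (i + 1) + j := by
        conv_rhs => rw [← Nat.div_add_mod' j (p ^ i)]
        ring
      rw [coeff_coord_powerSeries, hg, hindex]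
  refine (hS.image fun g n => PowerSeries.coeff n g).subset ?_
  rintro _ ⟨i, j, hj, rfl⟩
  obtain ⟨g, hgS, hg⟩ := kernel i j hj
  exact ⟨g, hgS, funext hg⟩

end CartierOperators

section Christol

variable {p : ℕ} [Fact p.Prime]

theorem exists_mem_span_pow_char_pow {k F : Type*} [Field k] [Field F] [CharP F p] [Algebra k F]
    {t : k} (htk : IsFrobeniusBasis p t) (htF : IsFrobeniusBasis p (algebraMap k F t)) {f : F}
    (hf : IsAlgebraic k f) :
    ∃ n, f ∈ Submodule.span k (Set.range fun i : Fin n => f ^ p ^ ((i : ℕ) + 1)) := by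
  by_contra! hnot
  have hli : ∀ n, LinearIndependent k fun i : Fin n => f ^ p ^ (i : ℕ) := by
    intro n
    induction n with
    | zero => exact linearIndependent_empty_type
    | succ n ih =>
      have hpow : LinearIndependent k fun i : Fin n => f ^ p ^ ((i : ℕ) + 1) := by
        simpa only [pow_succ, pow_mul] using linearIndependent_pow_char htk.2 htF.1 ih
      have hcons : (fun i : Fin (n + 1) => f ^ p ^ (i : ℕ)) =
          Fin.cons f fun i : Fin n => f ^ p ^ ((i : ℕ) + 1) := by
        funext i
        cases i using Fin.cases <;> simp
      rw [hcons]
      exact linearIndependent_finCons.2 ⟨hpow, hnot n⟩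
  have : FiniteDimensional k k⟮f⟯ := adjoin.finiteDimensional hf.isIntegral
  let n := Module.finrank k k⟮f⟯ + 1
  have hgen : LinearIndependent k fun i : Fin n => AdjoinSimple.gen k f ^ p ^ (i : ℕ) :=
    LinearIndependent.of_comp k⟮f⟯.val.toLinearMap (by simpa [Function.comp_def] using hli n)
  simpa [n] using hgen.fintype_card_le_finrank

theorem exists_eq_sum_pow_char_pow_mul {A k F : Type*} [CommRing A] [IsDomain A] [Field k]
    [Field F] [CharP F p] [Algebra A k] [IsFractionRing A k] [Algebra k F] [Algebra A F]
    [IsScalarTower A k F] {t : k} (htk : IsFrobeniusBasis p t)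
    (htF : IsFrobeniusBasis p (algebraMap k F t)) {f : F} (hf : IsAlgebraic k f) :
    ∃ (a : A) (g : F) (n : ℕ) (C : Fin n → A), f = algebraMap A F a * g ∧
      g = ∑ i : Fin n, g ^ p ^ ((i : ℕ) + 1) * algebraMap A F (C i) := by
  obtain ⟨n, hn⟩ := exists_mem_span_pow_char_pow htk htF hf
  obtain ⟨r, hr⟩ := (Submodule.mem_span_range_iff_exists_fun k).1 hn
  obtain ⟨⟨a, ha⟩, hB⟩ := IsLocalization.exist_integer_multiples_of_finite (nonZeroDivisors A) r
  choose B hB using hB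
  have ha0 : algebraMap A F a ≠ 0 := by
    rw [IsScalarTower.algebraMap_apply A k F, Ne, map_eq_zero]
    exact IsFractionRing.to_map_ne_zero_of_mem_nonZeroDivisors ha
  have hBF : ∀ i, algebraMap A F (B i) = algebraMap A F a * algebraMap k F (r i) := fun i => by
    rw [IsScalarTower.algebraMap_apply A k F, hB, Algebra.smul_def, map_mul,
      ← IsScalarTower.algebraMap_apply]
  refine ⟨a, f / algebraMap A F a, n, fun i => B i * a ^ (p ^ ((i : ℕ) + 1) - 2),
    (mul_div_cancel₀ f ha0).symm, ?_⟩
  conv_lhs => rw [← hr, Finset.sum_div]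
  refine Finset.sum_congr rfl fun i _ => ?_
  have hexp : p ^ ((i : ℕ) + 1) = (p ^ ((i : ℕ) + 1) - 2) + 2 :=
    (Nat.sub_add_cancel ((Fact.out : p.Prime).two_le.trans
      (Nat.le_self_pow (Nat.succ_ne_zero _) p))).symm
  have ha_pow : algebraMap A F a ^ p ^ ((i : ℕ) + 1) =
      algebraMap A F a ^ (p ^ ((i : ℕ) + 1) - 2) * algebraMap A F a ^ 2 := by
    rw [← pow_add, ← hexp]
  rw [map_mul, map_pow, hBF, Algebra.smul_def, div_pow, ha_pow]
  field_simp

theorem finite_polynomial_natDegree_le {R : Type*} [CommRing R] [Finite R] (N : ℕ) :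
    {D : R[X] | D.natDegree ≤ N}.Finite := by
  have : Finite (degreeLT R (N + 1)) := Finite.of_equiv _ (degreeLTEquiv R (N + 1)).symm.toEquiv
  refine (Set.toFinite (degreeLT R (N + 1) : Set R[X])).subset fun D hD => ?_
  exact mem_degreeLT.2 ((degree_le_of_natDegree_le hD).trans_lt
    (by exact_mod_cast N.lt_succ_self))

/-- The combinations of `g, g ^ p, …, g ^ p ^ n` whose coefficients are polynomials of degree at
most `N`. -/
def frobeniusCombinations (p : ℕ) {F : Type*} [CommRing F] [Algebra (ZMod p)[X] F] (g : F)
    (n N : ℕ) : Set F :=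
  {h | ∃ D : Fin (n + 1) → (ZMod p)[X], (∀ i, (D i).natDegree ≤ N) ∧
    ∑ i : Fin (n + 1), g ^ p ^ (i : ℕ) * algebraMap (ZMod p)[X] F (D i) = h}

theorem frobeniusCombinations_finite {F : Type*} [CommRing F] [Algebra (ZMod p)[X] F] (g : F)
    (n N : ℕ) : (frobeniusCombinations p g n N).Finite :=
  ((Set.Finite.pi' fun _ => finite_polynomial_natDegree_le N).image fun D : Fin (n + 1) → _ =>
    ∑ i : Fin (n + 1), g ^ p ^ (i : ℕ) * algebraMap (ZMod p)[X] F (D i)).subset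
      fun _ ⟨D, hD, h⟩ => ⟨D, hD, h⟩

theorem mul_mem_frobeniusCombinations {F : Type*} [CommRing F] [Algebra (ZMod p)[X] F] (g : F)
    (n : ℕ) {N : ℕ} {D : (ZMod p)[X]} (hD : D.natDegree ≤ N) :
    algebraMap (ZMod p)[X] F D * g ∈ frobeniusCombinations p g n N := by
  refine ⟨Fin.cons D 0, fun i => ?_, ?_⟩
  · cases i using Fin.cases <;> simp [hD]
  · simp [Fin.sum_univ_succ, mul_comm]

theorem coord_mem_frobeniusCombinations {F : Type*} [CommRing F] [CharP F p]
    [Algebra (ZMod p)[X] F]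
    (hX : IsFrobeniusBasis p (algebraMap (ZMod p)[X] F Polynomial.X)) {g : F} {n N : ℕ}
    {C : Fin n → (ZMod p)[X]} (hg : g = ∑ i : Fin n, g ^ p ^ ((i : ℕ) + 1) * algebraMap _ F (C i))
    (hC : ∀ i, (C i).natDegree ≤ N) {h : F} (hh : h ∈ frobeniusCombinations p g n N) (l : Fin p) :
    hX.coord h l ∈ frobeniusCombinations p g n N := by
  obtain ⟨D, hD, rfl⟩ := hh
  have hsum : ∑ i : Fin (n + 1), g ^ p ^ (i : ℕ) * algebraMap _ F (D i) =
      ∑ i : Fin n, (g ^ p ^ (i : ℕ)) ^ p * algebraMap _ F (D 0 * C i + D i.succ) := by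
    rw [Fin.sum_univ_succ, Fin.val_zero, pow_zero, pow_one]
    conv_lhs => enter [1, 1]; rw [hg]
    rw [Finset.sum_mul, ← Finset.sum_add_distrib]
    refine Finset.sum_congr rfl fun i _ => ?_
    rw [Fin.val_succ, map_add, map_mul, ← pow_mul, ← pow_succ]
    ring
  have hdeg : ∀ i : Fin n, (D 0 * C i + D i.succ).natDegree ≤ p * N := fun i =>
    calc (D 0 * C i + D i.succ).natDegree
        ≤ N + N := (natDegree_add_le_of_degree_le (natDegree_mul_le_of_le (hD 0) (hC i))
          ((hD i.succ).trans (Nat.le_add_right N N)))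
      _ ≤ p * N := by
        rw [← two_mul]
        exact Nat.mul_le_mul_right N (Fact.out : p.Prime).two_le
  refine ⟨Fin.snoc (fun i => isFrobeniusBasis_polynomial_X.coord (D 0 * C i + D i.succ) l) 0,
    fun i => ?_, ?_⟩
  · cases i using Fin.lastCases with
    | last => simp
    | cast i =>
      rw [Fin.snoc_castSucc]
      exact (natDegree_coord_polynomial_le _ l).trans (Nat.div_le_of_le_mul (hdeg i))
  · rw [hsum, hX.coord_sum_pow_mul]
    simp [Fin.sum_univ_castSucc, isFrobeniusBasis_polynomial_X.map_coord hX _ rfl]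

theorem algebraMap_powerSeries_X_eq_algebraMap_X {R F : Type*} [CommRing R] [CommRing F]
    [Algebra R⟦X⟧ F] [Algebra R[X] F] [IsScalarTower R[X] R⟦X⟧ F] :
    algebraMap R⟦X⟧ F PowerSeries.X = algebraMap R[X] F Polynomial.X := by
  rw [IsScalarTower.algebraMap_apply R[X] R⟦X⟧ F, PowerSeries.algebraMap_apply', Polynomial.coe_X,
    PowerSeries.map_X]

variable {k F : Type*} [Field k] [Field F] [CharP F p] [Algebra (ZMod p)[X] k]
  [IsFractionRing (ZMod p)[X] k] [Algebra (ZMod p)⟦X⟧ F] [IsFractionRing (ZMod p)⟦X⟧ F]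
  [Algebra k F] [Algebra (ZMod p)[X] F] [IsScalarTower (ZMod p)[X] k F]
  [IsScalarTower (ZMod p)[X] (ZMod p)⟦X⟧ F]

theorem isKAutomatic_coeff_of_mem_frobeniusCombinations
    (hX : IsFrobeniusBasis p (algebraMap (ZMod p)[X] F Polynomial.X)) {g : F} {n N : ℕ}
    {C : Fin n → (ZMod p)[X]} (hg : g = ∑ i : Fin n, g ^ p ^ ((i : ℕ) + 1) * algebraMap _ F (C i))
    (hC : ∀ i, (C i).natDegree ≤ N) {f : (ZMod p)⟦X⟧}
    (hf : algebraMap _ F f ∈ frobeniusCombinations p g n N) :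
    IsKAutomatic p fun n => PowerSeries.coeff n f := by
  refine isKAutomatic_coeff_of_coord_mem (S := algebraMap _ F ⁻¹' frobeniusCombinations p g n N)
    ((frobeniusCombinations_finite g n N).preimage (IsFractionRing.injective _ F).injOn)
    (fun h hh l => ?_) hf
  rw [Set.mem_preimage, isFrobeniusBasis_powerSeries_X.map_coord hX _
    algebraMap_powerSeries_X_eq_algebraMap_X]
  exact coord_mem_frobeniusCombinations hX hg hC hh l

theorem isFrobeniusBasis_algebraMap_powerSeries_X :
    IsFrobeniusBasis p (algebraMap (ZMod p)[X] F Polynomial.X) := by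
  rw [← algebraMap_powerSeries_X_eq_algebraMap_X]
  exact isFrobeniusBasis_powerSeries_X.algebraMap_fractionRing

theorem isKAutomatic_coeff_of_isAlgebraic {f : (ZMod p)⟦X⟧}
    (hf : IsAlgebraic k (algebraMap _ F f)) : IsKAutomatic p fun n => PowerSeries.coeff n f := by
  have : CharP k p := (algebraMap k F).charP (algebraMap k F).injective p
  have hXF : IsFrobeniusBasis p (algebraMap (ZMod p)[X] F Polynomial.X) :=
    isFrobeniusBasis_algebraMap_powerSeries_X
  obtain ⟨a, g, n, C, hfg, hg⟩ := exists_eq_sum_pow_char_pow_mul (A := (ZMod p)[X])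
    (isFrobeniusBasis_polynomial_X.algebraMap_fractionRing (Q := k))
    (by rwa [← IsScalarTower.algebraMap_apply]) hf
  let N := max a.natDegree (Finset.univ.sup fun i => (C i).natDegree)
  refine isKAutomatic_coeff_of_mem_frobeniusCombinations hXF (N := N) hg
    (fun i => le_max_of_le_right (Finset.le_sup (f := fun i => (C i).natDegree) (by simp))) ?_
  rw [hfg]
  exact mul_mem_frobeniusCombinations g n (le_max_left _ _)

theorem isKAutomatic_coeff_of_isAlgebraic_sum {Ω ι : Type*} [Field Ω] [Algebra k Ω] [Algebra F Ω]
    [IsScalarTower k F Ω] [Fintype ι] {γ : ι → Ω} (hγ : LinearIndependent F γ)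
    (hγalg : ∀ i, IsAlgebraic k (γ i)) {f : ι → (ZMod p)⟦X⟧}
    (hf : IsAlgebraic k (∑ i, algebraMap _ F (f i) • γ i)) (i : ι) :
    IsKAutomatic p fun n => PowerSeries.coeff n (f i) := by
  let E := algebraicClosure k F
  have : CharP k p := (algebraMap k F).charP (algebraMap k F).injective p
  have : CharP Ω p := charP_of_injective_algebraMap (algebraMap F Ω).injective p
  have : IsIntegrallyClosedIn E F :=
    isIntegrallyClosedIn_iff.2 ⟨(algebraMap E F).injective, fun {x} hx =>
      ⟨⟨x, mem_algebraicClosure_iff.2 (hx.isAlgebraic.restrictScalars k)⟩, rfl⟩⟩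
  have hXk : IsFrobeniusBasis p (algebraMap (ZMod p)[X] k Polynomial.X) :=
    isFrobeniusBasis_polynomial_X.algebraMap_fractionRing
  have hXF : IsFrobeniusBasis p (algebraMap k F (algebraMap (ZMod p)[X] k Polynomial.X)) := by
    rw [← IsScalarTower.algebraMap_apply]
    exact isFrobeniusBasis_algebraMap_powerSeries_X
  have hXE : IsFrobeniusBasis p (algebraMap k E (algebraMap (ZMod p)[X] k Polynomial.X)) :=
    hXk.algebraMap_of_isAlgebraic hXF
  obtain ⟨e, he⟩ := mem_range_algebraMap_of_isAlgebraic_sum hXE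
    (by rwa [← IsScalarTower.algebraMap_apply]) hγ (fun i => (hγalg i).tower_top E)
    (hf.tower_top E) i
  refine isKAutomatic_coeff_of_isAlgebraic (k := k) (F := F) ?_
  rw [← he]
  exact mem_algebraicClosure_iff.1 e.2

theorem isKAutomatic_pi {α ι : Type*} {β : ι → Type*} [Finite ι] {q : ℕ} {b : ∀ i, ℕ → β i}
    (hb : ∀ i, IsKAutomatic q (b i)) (Φ : (∀ i, β i) → α) :
    IsKAutomatic q fun n => Φ fun i => b i n := by
  refine ((Set.Finite.pi' hb).image fun c n => Φ fun i => c i n).subset ?_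
  rintro _ ⟨i, j, hj, rfl⟩
  exact ⟨fun l n => b l (n * q ^ i + j), fun l => ⟨i, j, hj, rfl⟩, rfl⟩

end Christol

section FunctionField

variable {k Ω : Type*} [Field k] [Field Ω] [Algebra k Ω]

theorem isAlgebraic_of_isAlgebraic_subfield {M : Subfield Ω} (hM : ∀ z ∈ M, IsAlgebraic k z)
    {y : Ω} (hy : IsAlgebraic M y) : IsAlgebraic k y := by
  have hle : M ≤ (algebraicClosure k Ω).toSubfield := fun z hz =>
    mem_algebraicClosure_iff.2 (hM z hz)
  let _ : Algebra M (algebraicClosure k Ω) := (Subfield.inclusion hle).toAlgebra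
  have : IsScalarTower M (algebraicClosure k Ω) Ω := .of_algebraMap_eq fun _ => rfl
  exact (hy.tower_top (algebraicClosure k Ω)).restrictScalars k

theorem isAlgebraic_of_isAlgebraic_adjoin {F : Type*} [Field F] [Algebra F k] [Algebra F Ω]
    [IsScalarTower F k Ω] {S : Set Ω} (hS : ∀ s ∈ S, IsAlgebraic k s) {y : Ω}
    (hy : IsAlgebraic (adjoin F S) y) : IsAlgebraic k y := by
  have hle : adjoin F S ≤ (algebraicClosure k Ω).restrictScalars F :=
    adjoin_le_iff.2 fun s hs => mem_algebraicClosure_iff.2 (hS s hs)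
  exact isAlgebraic_of_isAlgebraic_subfield (M := (adjoin F S).toSubfield)
    (fun z hz => mem_algebraicClosure_iff.1 (hle hz)) hy

theorem isAlgebraic_adjoin_simple_comm {x y : Ω} (hy : Transcendental k y)
    (h : IsAlgebraic k⟮x⟯ y) : IsAlgebraic k⟮y⟯ x := by
  by_cases hx : IsAlgebraic k x
  · exact hx.tower_top k⟮y⟯
  · exact isAlgebraic_adjoin_iff.2 (.adjoin_singleton hx hy (isAlgebraic_adjoin_iff.1 h))

theorem fg_span_of_degOver_lt_aleph0 {F : Subfield Ω} {S : Set Ω}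
    (hdeg : degOver F S < Cardinal.aleph0) : (Submodule.span F S).FG := by
  have : Module.Finite F (Submodule.span F S) := Module.rank_lt_aleph0_iff.1 hdeg
  exact Module.Finite.iff_fg.1 this

theorem isAlgebraic_of_mem_of_degOver_lt_aleph0 {F K : Subfield Ω}
    (hdeg : degOver F (K : Set Ω) < Cardinal.aleph0) {z : Ω} (hz : z ∈ K) : IsAlgebraic F z := by
  have hspan : (Algebra.adjoin F (K : Set Ω)).toSubmodule = Submodule.span F (K : Set Ω) := by
    rw [Algebra.adjoin_eq_span]
    congr 1
    exact congrArg _ (Submonoid.closure_eq K.toSubmonoid)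
  refine (IsIntegral.of_mem_of_fg (Algebra.adjoin F (K : Set Ω)) ?_ z
    (Algebra.subset_adjoin hz)).isAlgebraic
  rw [hspan]
  exact fg_span_of_degOver_lt_aleph0 hdeg

variable {K : Subfield Ω} {x₀ : Ω}
  (hdeg : degOver (Subfield.closure {x₀}) (K : Set Ω) < Cardinal.aleph0)
include hdeg

theorem isAlgebraic_of_degOver_closure_lt_aleph0 (hx₀ : IsAlgebraic k x₀) {y : Ω}
    (hy : IsAlgebraic K y) : IsAlgebraic k y := by
  have hclosure : Subfield.closure {x₀} ≤ (algebraicClosure k Ω).toSubfield := by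
    rw [Subfield.closure_le, Set.singleton_subset_iff]
    exact mem_algebraicClosure_iff.2 hx₀
  exact isAlgebraic_of_isAlgebraic_subfield (fun z hz => isAlgebraic_of_isAlgebraic_subfield
    (fun w hw => mem_algebraicClosure_iff.1 (hclosure hw))
    (isAlgebraic_of_mem_of_degOver_lt_aleph0 hdeg hz)) hy

theorem isAlgebraic_generator_of_transcendental {F : Type*} [Field F] [Algebra F k] [Algebra F Ω]
    [IsScalarTower F k Ω] {π : Ω} (hπF : Transcendental F π) (hπk : IsAlgebraic k π)
    (hπK : IsAlgebraic K π) : IsAlgebraic k x₀ := by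
  have hx₀ : IsAlgebraic F⟮x₀⟯ x₀ := isAlgebraic_algebraMap (AdjoinSimple.gen F x₀)
  have hπ : IsAlgebraic F⟮x₀⟯ π := isAlgebraic_of_degOver_closure_lt_aleph0 hdeg hx₀ hπK
  exact isAlgebraic_of_isAlgebraic_adjoin (by simpa using hπk)
    (isAlgebraic_adjoin_simple_comm hπF hπ)

theorem finite_of_linearIndependent_of_degOver_closure_lt_aleph0 (hx₀ : IsAlgebraic k x₀)
    {ι : Type*} {c : ι → Ω} (hcK : ∀ i, c i ∈ K) (hc : LinearIndependent k c) : Finite ι := by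
  obtain ⟨S, hS⟩ := fg_span_of_degOver_lt_aleph0 hdeg
  let W : Submodule k⟮x₀⟯ Ω := Submodule.span k⟮x₀⟯ S
  have hclosure : Subfield.closure {x₀} ≤ k⟮x₀⟯.toSubfield := by
    rw [Subfield.closure_le, Set.singleton_subset_iff]
    exact mem_adjoin_simple_self k x₀
  have hKW : ∀ z ∈ K, z ∈ W := fun z hz => by
    have hz' : z ∈ Submodule.span (Subfield.closure {x₀}) (S : Set Ω) :=
      hS ▸ Submodule.subset_span hz
    refine Submodule.span_induction (fun _ h => Submodule.subset_span h) W.zero_mem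
      (fun _ _ _ _ => W.add_mem) (fun a _ _ hw => W.smul_mem ⟨a, hclosure a.2⟩ hw) hz'
  have : FiniteDimensional k k⟮x₀⟯ := adjoin.finiteDimensional hx₀.isIntegral
  have : Module.Finite k⟮x₀⟯ W := Module.Finite.span_of_finite _ S.finite_toSet
  have : Module.Finite k W := Module.Finite.trans k⟮x₀⟯ W
  have hcW : LinearIndependent k fun i => (⟨c i, hKW _ (hcK i)⟩ : W) :=
    LinearIndependent.of_comp (W.subtype.restrictScalars k) hc
  exact hcW.finite

end FunctionField

section Evaluation

instance faithfulSMul_polynomial_powerSeries {R : Type*} [CommRing R] : FaithfulSMul R[X] R⟦X⟧ := by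
  rw [faithfulSMul_iff_algebraMap_injective]
  intro f g hfg
  simpa [PowerSeries.algebraMap_apply'] using hfg

theorem isLinearTopology_integer {L Γ₀ : Type*} [Field L] [LinearOrderedCommGroupWithZero Γ₀]
    [Valued L Γ₀] : IsLinearTopology (Valued.v : Valuation L Γ₀).integer
      (Valued.v : Valuation L Γ₀).integer := by
  have hbasis := (Valued.hasBasis_nhds_zero L Γ₀).comap
    ((↑) : (Valued.v : Valuation L Γ₀).integer → L)
  simp only [Valuation.restrict_lt_iff_lt_embedding] at hbasis
  let embedding :=
    MonoidWithZeroHom.ValueGroup₀.embedding (f := .ofClass (Valued.v : Valuation L Γ₀))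
  refine .mk_of_hasBasis _ (s := fun γ => Valuation.ltIdeal (Valued.v : Valuation L Γ₀)
    (Units.map embedding.toMonoidHom γ)) (p := fun _ => True) ?_
  rw [nhds_induced]
  exact hbasis

theorem exists_powerSeries_ringHom_hasSum {A : Type*} [CommRing A] [CompleteSpace Kv]
    (φ : A →+* Kv) (hφ : ∀ a, Valued.v (φ a) ≤ 1) {π : Kv} (hπ : Valued.v π < 1) :
    ∃ ev : A⟦X⟧ →+* Kv, ∀ f : A⟦X⟧,
      HasSum (fun n => φ (PowerSeries.coeff n f) * π ^ n) (ev f) := by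
  let O := (Valued.v : Valuation Kv ZM0).integer
  have : IsUniformAddGroup O := AddSubgroup.isUniformAddGroup O.toAddSubgroup
  have : IsLinearTopology O O := isLinearTopology_integer
  have : CompleteSpace O := (Valued.isClosed_integer Kv).completeSpace_coe
  have hπeval : PowerSeries.HasEval (⟨π, hπ.le⟩ : O) :=
    tendsto_subtype_rng.2 (Valued.tendsto_zero_pow_of_v_lt_one hπ)
  let _ : UniformSpace A := ⊥
  have : DiscreteTopology A := ⟨rfl⟩
  have hcont : Continuous (φ.codRestrict O hφ) := continuous_of_discreteTopology
  refine ⟨O.subtype.comp (PowerSeries.eval₂Hom hcont hπeval), fun f => ?_⟩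
  rw [RingHom.comp_apply, PowerSeries.coe_eval₂Hom]
  exact (PowerSeries.hasSum_eval₂ hcont hπeval f).map O.subtype continuous_subtype_val

theorem linearIndependent_powerSeries_of_X_dvd {A M ι : Type*} [CommRing A] [AddCommGroup M]
    [Module A⟦X⟧ M] {c : ι → M} (hX : ∀ y : M, (PowerSeries.X : A⟦X⟧) • y = 0 → y = 0)
    (hc : ∀ (s : Finset ι) (g : ι → A⟦X⟧), ∑ i ∈ s, g i • c i = 0 →
      ∀ i ∈ s, PowerSeries.X ∣ g i) :
    LinearIndependent A⟦X⟧ c := by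
  have hdvd (s : Finset ι) (n : ℕ) : ∀ g : ι → A⟦X⟧, ∑ i ∈ s, g i • c i = 0 →
      ∀ i ∈ s, PowerSeries.X ^ n ∣ g i := by
    induction n with
    | zero => exact fun g _ i _ => by simp
    | succ n ih =>
      intro g hg i hi
      choose! h hgh using hc s g hg
      have hh : ∑ i ∈ s, h i • c i = 0 := by
        refine hX _ ?_
        rw [← hg, Finset.smul_sum]
        exact Finset.sum_congr rfl fun j hj => by rw [hgh j hj, mul_smul]
      rw [hgh i hi, pow_succ']
      exact mul_dvd_mul_left _ (ih h hh i hi)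
  refine linearIndependent_iff'.2 fun s g hg i hi => PowerSeries.ext fun n => ?_
  exact PowerSeries.X_pow_dvd_iff.1 (hdvd s (n + 1) g hg i hi) n n.lt_succ_self

variable {p : ℕ} [Algebra (ZMod p) Kv]

theorem valuation_algebraMap_zmod_le_one [NeZero p] (a : ZMod p) :
    Valued.v (algebraMap (ZMod p) Kv a) ≤ 1 := by
  obtain ⟨n, rfl⟩ := ZMod.natCast_zmod_surjective a
  rw [map_natCast]
  exact natCast_mem (Valued.v : Valuation Kv ZM0).integer n

variable (p) in
/-- The ideal `π A_v` of the valuation ring, as an `𝔽_p`-subspace of `K_v`. Digits are compared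
through the quotient of `K_v` by it. -/
def principalIdeal (π : Kv) : Submodule (ZMod p) Kv :=
  AddSubgroup.toZModSubmodule p ((Valued.v : Valuation Kv ZM0).leAddSubgroup (Valued.v π))

theorem mem_principalIdeal {π y : Kv} : y ∈ principalIdeal p π ↔ Valued.v y ≤ Valued.v π :=
  Iff.rfl

section

variable [Algebra (ZMod p)⟦X⟧ Kv] {π : Kv}
  (hsum : ∀ f : (ZMod p)⟦X⟧,
    HasSum (fun n => algebraMap (ZMod p) Kv (PowerSeries.coeff n f) * π ^ n)
      (algebraMap (ZMod p)⟦X⟧ Kv f))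
include hsum

theorem algebraMap_powerSeries_X_of_hasSum : algebraMap (ZMod p)⟦X⟧ Kv PowerSeries.X = π := by
  refine (hsum _).unique ?_
  convert hasSum_single 1 fun n hn => ?_ using 1
  · simp
  · simp [PowerSeries.coeff_X, hn]

variable [NeZero p] (hπ : Valued.v π < 1)
include hπ

theorem valuation_algebraMap_powerSeries_le_one (f : (ZMod p)⟦X⟧) :
    Valued.v (algebraMap (ZMod p)⟦X⟧ Kv f) ≤ 1 :=
  (Valued.isClosed_integer Kv).mem_of_tendsto (hsum f) <| .of_forall fun _ =>
    sum_mem fun n _ => mul_mem (valuation_algebraMap_zmod_le_one _) (pow_mem hπ.le n)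

theorem smul_sub_coeff_zero_smul_mem_principalIdeal (f : (ZMod p)⟦X⟧) {c : Kv}
    (hc : Valued.v c ≤ 1) : f • c - PowerSeries.coeff 0 f • c ∈ principalIdeal p π := by
  have hC : algebraMap (ZMod p)⟦X⟧ Kv (PowerSeries.C (PowerSeries.coeff 0 f)) =
      algebraMap (ZMod p) Kv (PowerSeries.coeff 0 f) :=
    RingHom.congr_fun (Subsingleton.elim ((algebraMap (ZMod p)⟦X⟧ Kv).comp PowerSeries.C) _) _
  rw [Algebra.smul_def, Algebra.smul_def, ← hC, ← sub_mul, ← map_sub,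
    PowerSeries.coeff_zero_eq_constantCoeff_apply, PowerSeries.sub_const_eq_X_mul_shift, map_mul,
    algebraMap_powerSeries_X_of_hasSum hsum, mul_assoc, mem_principalIdeal, map_mul, map_mul]
  exact mul_le_of_le_one_right' (mul_le_one' (valuation_algebraMap_powerSeries_le_one hsum hπ _) hc)

theorem linearIndependent_powerSeries_of_mkQ (hπ0 : π ≠ 0) {ι : Type*} {c : ι → Kv}
    (hc1 : ∀ i, Valued.v (c i) ≤ 1)
    (hc : LinearIndependent (ZMod p) ((principalIdeal p π).mkQ ∘ c)) :
    LinearIndependent (ZMod p)⟦X⟧ c := by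
  refine linearIndependent_powerSeries_of_X_dvd (fun y hy => ?_) fun s g hg i hi => ?_
  · rw [Algebra.smul_def, algebraMap_powerSeries_X_of_hasSum hsum] at hy
    exact (mul_eq_zero.1 hy).resolve_left hπ0
  · rw [PowerSeries.X_dvd_iff, ← PowerSeries.coeff_zero_eq_constantCoeff_apply]
    refine linearIndependent_iff'.1 hc s (fun i => PowerSeries.coeff 0 (g i)) ?_ i hi
    simp only [Function.comp_apply, ← map_smul, ← map_sum]
    rw [Submodule.mkQ_apply, Submodule.Quotient.mk_eq_zero, ← neg_mem_iff, ← zero_sub, ← hg,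
      ← Finset.sum_sub_distrib]
    exact sum_mem fun j _ => smul_sub_coeff_zero_smul_mem_principalIdeal hsum hπ (g j) (hc1 j)

omit [NeZero p] in
theorem faithfulSMul_powerSeries [Fact p.Prime] (hπ0 : π ≠ 0) : FaithfulSMul (ZMod p)⟦X⟧ Kv := by
  have hone : (principalIdeal p π).mkQ 1 ≠ 0 := by
    rw [Submodule.mkQ_apply, Ne, Submodule.Quotient.mk_eq_zero, mem_principalIdeal, map_one]
    exact hπ.not_ge
  have hind : LinearIndependent (ZMod p)⟦X⟧ fun _ : Unit => (1 : Kv) :=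
    linearIndependent_powerSeries_of_mkQ hsum hπ hπ0 (fun _ => (map_one _).le)
      (linearIndependent_unique_iff.2 hone)
  rw [faithfulSMul_iff_algebraMap_injective, injective_iff_map_eq_zero]
  intro f hf
  rw [Algebra.algebraMap_eq_smul_one] at hf
  simpa using linearIndependent_iff'.1 hind {()} (fun _ => f) (by simpa using hf)

omit [NeZero p] in
theorem transcendental_zmod_of_hasSum [Fact p.Prime] (hπ0 : π ≠ 0) :
    Transcendental (ZMod p) π := by
  have : FaithfulSMul (ZMod p)⟦X⟧ Kv := faithfulSMul_powerSeries hsum hπ hπ0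
  have : IsScalarTower (ZMod p) (ZMod p)⟦X⟧ Kv := .of_algebraMap_eq' (Subsingleton.elim _ _)
  have hX : PowerSeries.X = algebraMap (ZMod p)[X] (ZMod p)⟦X⟧ X := by
    simp [PowerSeries.algebraMap_apply']
  rw [← algebraMap_powerSeries_X_of_hasSum hsum,
    transcendental_algebraMap_iff (FaithfulSMul.algebraMap_injective _ _), hX,
    transcendental_algebraMap_iff (FaithfulSMul.algebraMap_injective _ _)]
  exact transcendental_X _

end

end Evaluation

section Digits

theorem exists_mem_valuation_sub_le_of_dense {S : Set Kv} (hS : Dense S) {π : Kv} (hπ0 : π ≠ 0)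
    (y : Kv) : ∃ c ∈ S, Valued.v (y - c) ≤ Valued.v π := by
  have hcont : Continuous fun z : Kv => (y - z) / π :=
    (continuous_const.sub continuous_id).div_const π
  obtain ⟨c, hc, hcS⟩ := hS.inter_open_nonempty _ ((Valued.isOpen_integer Kv).preimage hcont)
    ⟨y, by simp⟩
  refine ⟨c, hcS, ?_⟩
  have hv : Valued.v ((y - c) / π) ≤ (1 : ZM0) := hc
  rwa [map_div₀, div_le_one₀ (zero_lt_iff.2 ((Valuation.ne_zero_iff _).2 hπ0))] at hv

theorem exists_submodule_zmod_coe_eq_of_addClosed {p : ℕ} [NeZero p] {M : Type*} [AddCommGroup M]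
    [Module (ZMod p) M] {S : Set M} (hS : S.Nonempty) (hadd : ∀ μ ∈ S, ∀ ν ∈ S, μ + ν ∈ S) :
    ∃ G : Submodule (ZMod p) M, (G : Set M) = S := by
  have hnsmul (n : ℕ) {γ : M} (hγ : γ ∈ S) : (n + 1) • γ ∈ S := by
    induction n with
    | zero => simpa using hγ
    | succ n ih => exact succ_nsmul γ (n + 1) ▸ hadd _ ih _ hγ
  have hsmul (a : ZMod p) {γ : M} (hγ : γ ∈ S) : a • γ ∈ S := by
    obtain ⟨n, hn⟩ := ZMod.natCast_zmod_surjective (a - 1)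
    rw [← sub_add_cancel a 1, ← hn, ← Nat.cast_add_one, Nat.cast_smul_eq_nsmul]
    exact hnsmul n hγ
  obtain ⟨γ, hγ⟩ := hS
  exact ⟨{  carrier := S
            add_mem' := fun hμ hν => hadd _ hμ _ hν
            zero_mem' := by simpa using hsmul 0 hγ
            smul_mem' := fun a _ hμ => hsmul a hμ }, rfl⟩

theorem IsCompleteSetOfReps.nonempty {π : Kv} {Γ : Set Kv} (hΓ : IsCompleteSetOfReps π Γ) :
    Γ.Nonempty :=
  (hΓ.2 0 (by simp)).exists.imp fun _ => And.left

variable {p : ℕ} [Algebra (ZMod p) Kv] {π : Kv} {G : Submodule (ZMod p) Kv}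

theorem IsCompleteSetOfReps.linearIndependent_mkQ (hG : IsCompleteSetOfReps π (G : Set Kv))
    {ι : Type*} {γ : ι → G} (hγ : LinearIndependent (ZMod p) γ) {c : ι → Kv}
    (hc : ∀ i, Valued.v ((γ i : Kv) - c i) ≤ Valued.v π) :
    LinearIndependent (ZMod p) ((principalIdeal p π).mkQ ∘ c) := by
  have hcγ : (principalIdeal p π).mkQ ∘ c = ((principalIdeal p π).mkQ ∘ₗ G.subtype) ∘ γ :=
    funext fun i => ((Submodule.Quotient.eq _).2 (hc i)).symm
  rw [hcγ]
  refine hγ.map' _ (LinearMap.ker_eq_bot'.2 fun g hg => Subtype.ext ?_)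
  have hgπ : Valued.v (g : Kv) ≤ Valued.v π := (Submodule.Quotient.mk_eq_zero _).1 hg
  exact (hG.2 g (hG.1 g g.2)).unique ⟨g.2, by simp⟩ ⟨G.zero_mem, by simpa using hgπ⟩

variable [Algebra (ZMod p)⟦X⟧ Kv]
  (hsum : ∀ f : (ZMod p)⟦X⟧,
    HasSum (fun n => algebraMap (ZMod p) Kv (PowerSeries.coeff n f) * π ^ n)
      (algebraMap (ZMod p)⟦X⟧ Kv f))
  (hπ0 : π ≠ 0)
include hsum hπ0

theorem sum_algebraMap_mk_repr_mul_eq {ι : Type*} [Fintype ι]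
    (b : Module.Basis ι (ZMod p) G) {m : ℤ} {a : ℤ → Kv} {x : Kv}
    (hx : HasSum (fun n : ℕ => a (m + n) * π ^ (m + (n : ℤ))) x) (haG : ∀ n : ℕ, a (m + n) ∈ G) :
    ∑ i, algebraMap (ZMod p)⟦X⟧ Kv (.mk fun n => b.repr ⟨a (m + n), haG n⟩ i) * b i =
      x * π ^ (-m) := by
  refine (hasSum_sum fun i _ => (hsum _).mul_right (b i : Kv)).unique ?_
  convert hx.mul_right (π ^ (-m)) using 2 with n
  have hdigit : a (m + n) = ∑ i, b.repr ⟨a (m + n), haG n⟩ i • (b i : Kv) := by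
    simpa only [map_sum, map_smul, Submodule.subtype_apply] using
      congrArg G.subtype (b.sum_repr ⟨a (m + n), haG n⟩).symm
  rw [mul_assoc, ← zpow_add₀ hπ0, add_neg_cancel_comm, zpow_natCast, hdigit, Finset.sum_mul]
  simp only [PowerSeries.coeff_mk, Algebra.smul_def, mul_right_comm]

variable [Fact p.Prime] (hπ : Valued.v π < 1) (hG : IsCompleteSetOfReps π (G : Set Kv))
include hπ

theorem isAlgebraic_generator_of_isAlgebraic (F : Type*) {k : Type*} [Field F] [Field k]
    [Algebra (ZMod p)⟦X⟧ F] [Algebra F Kv] [IsScalarTower (ZMod p)⟦X⟧ F Kv] [Algebra k F]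
    [Algebra k Kv] [IsScalarTower k F Kv] [Algebra (ZMod p)[X] k] [Algebra (ZMod p)[X] F]
    [IsScalarTower (ZMod p)[X] k F] [IsScalarTower (ZMod p)[X] (ZMod p)⟦X⟧ F]
    {K : Subfield Kv} {x₀ : Kv}
    (hdeg : degOver (Subfield.closure {x₀}) (K : Set Kv) < Cardinal.aleph0)
    (hπK : IsAlgebraic K π) : IsAlgebraic k x₀ := by
  have hX : algebraMap k Kv (algebraMap (ZMod p)[X] k X) = π := by
    rw [IsScalarTower.algebraMap_apply k F Kv, ← IsScalarTower.algebraMap_apply (ZMod p)[X] k F,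
      ← algebraMap_powerSeries_X_eq_algebraMap_X, ← IsScalarTower.algebraMap_apply,
      algebraMap_powerSeries_X_of_hasSum hsum]
  let _ : Algebra (ZMod p) k := ((algebraMap (ZMod p)[X] k).comp C).toAlgebra
  have : IsScalarTower (ZMod p) k Kv := .of_algebraMap_eq' (Subsingleton.elim _ _)
  exact isAlgebraic_generator_of_transcendental hdeg (transcendental_zmod_of_hasSum hsum hπ hπ0)
    (hX ▸ isAlgebraic_algebraMap _) hπK

include hG

variable {F : Type*} [Field F] [Algebra (ZMod p)⟦X⟧ F] [IsFractionRing (ZMod p)⟦X⟧ F]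
  [Algebra F Kv] [IsScalarTower (ZMod p)⟦X⟧ F Kv]

theorem linearIndependent_of_valuation_sub_le {ι : Type*} {γ : ι → G}
    (hγ : LinearIndependent (ZMod p) γ) {c : ι → Kv}
    (hc : ∀ i, Valued.v ((γ i : Kv) - c i) ≤ Valued.v π) : LinearIndependent F c := by
  have hc1 (i : ι) : Valued.v (c i) ≤ 1 := by
    rw [← sub_sub_cancel (γ i : Kv) (c i)]
    exact Valuation.map_sub_le _ (hG.1 _ (γ i).2) ((hc i).trans hπ.le)
  rw [← LinearIndependent.iff_fractionRing (ZMod p)⟦X⟧ F]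
  exact linearIndependent_powerSeries_of_mkQ hsum hπ hπ0 hc1 (hG.linearIndependent_mkQ hγ hc)

variable {k : Type*} [Field k] [Algebra k F] [Algebra k Kv] [IsScalarTower k F Kv]
  {K : Subfield Kv} {x₀ : Kv} (hx₀ : IsAlgebraic k x₀)
  (hdeg : degOver (Subfield.closure {x₀}) (K : Set Kv) < Cardinal.aleph0)

variable (F)
include F hx₀ hdeg

theorem moduleFinite_of_isCompleteSetOfReps (hdense : Dense (K : Set Kv)) :
    Module.Finite (ZMod p) G := by
  let b := Module.Basis.ofVectorSpace (ZMod p) G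
  choose c hcK hc using fun i => exists_mem_valuation_sub_le_of_dense hdense hπ0 (b i : Kv)
  have hcF : LinearIndependent F c :=
    linearIndependent_of_valuation_sub_le hsum hπ0 hπ hG b.linearIndependent hc
  have : Finite (Module.Basis.ofVectorSpaceIndex (ZMod p) G) :=
    finite_of_linearIndependent_of_degOver_closure_lt_aleph0 hdeg hx₀ hcK (hcF.restrict_scalars' k)
  exact Module.Finite.of_basis b

variable [Algebra (ZMod p)[X] k] [IsFractionRing (ZMod p)[X] k]
  [Algebra (ZMod p)[X] F] [IsScalarTower (ZMod p)[X] k F] [IsScalarTower (ZMod p)[X] (ZMod p)⟦X⟧ F]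

theorem isKAutomatic_of_isExpansion_submodule (hdense : Dense (K : Set Kv))
    (hπK : IsAlgebraic K π) (hGK : ∀ γ ∈ G, IsAlgebraic K γ) {x : Kv} (hx : IsAlgebraic K x)
    {m : ℤ} {a : ℤ → Kv} (hexp : IsExpansion π (G : Set Kv) m a x) :
    IsKAutomatic p fun n : ℕ => a (m + n) := by
  have : CharP F p := charP_of_injective_ringHom
    ((algebraMap (ZMod p)⟦X⟧ F).comp PowerSeries.C).injective p
  have : Module.Finite (ZMod p) G :=
    moduleFinite_of_isCompleteSetOfReps hsum hπ0 hπ hG F hx₀ hdeg hdense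
  let b := Module.finBasis (ZMod p) G
  have hbF : LinearIndependent F fun i => (b i : Kv) :=
    linearIndependent_of_valuation_sub_le hsum hπ0 hπ hG b.linearIndependent (by simp)
  have haG (n : ℕ) : a (m + n) ∈ G := hexp.1 _ (by simp)
  have hxπ : IsAlgebraic k (∑ i, algebraMap (ZMod p)⟦X⟧ F
      (.mk fun n => b.repr ⟨a (m + n), haG n⟩ i) • (b i : Kv)) := by
    simp only [Algebra.smul_def, ← IsScalarTower.algebraMap_apply]
    rw [sum_algebraMap_mk_repr_mul_eq hsum hπ0 b hexp.2 haG]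
    refine isAlgebraic_of_degOver_closure_lt_aleph0 hdeg hx₀ (hx.mul ?_)
    exact mem_algebraicClosure_iff.1 (zpow_mem (mem_algebraicClosure_iff.2 hπK) (-m))
  have hcoord (i) : IsKAutomatic p fun n => b.repr ⟨a (m + n), haG n⟩ i := by
    simpa only [PowerSeries.coeff_mk] using isKAutomatic_coeff_of_isAlgebraic_sum hbF
      (fun i => isAlgebraic_of_degOver_closure_lt_aleph0 hdeg hx₀ (hGK _ (b i).2)) hxπ i
  simpa only [← Module.Basis.equivFun_apply, LinearEquiv.symm_apply_apply] using
    isKAutomatic_pi hcoord fun t => (b.equivFun.symm t : Kv)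

end Digits

/-- Suppose `Γ` is additively closed and `π` and all elements of `Γ` are
algebraic over `K`.  Then the digit sequence of the expansion of every algebraic
`x ∈ K_v` with respect to `(Γ, π)` is `p`-automatic. -/
theorem automatic_expansion_of_algebraic_of_addClosed
    {Kv : Type*} [Field Kv] [Valued Kv ZM0]
    (p : ℕ) [Fact p.Prime] (K : Subfield Kv)
    (hK : IsGlobalFunctionFieldCompletion p K)
    (π : Kv) (hπ0 : π ≠ 0) (hπ : Valued.v π < 1)
    (Γ : Set Kv) (hΓ : IsCompleteSetOfReps π Γ)
    (hadd : ∀ μ ∈ Γ, ∀ ν ∈ Γ, μ + ν ∈ Γ)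
    (hπalg : IsAlgebraic ↥K π) (hΓalg : ∀ γ ∈ Γ, IsAlgebraic ↥K γ)
    (x : Kv) (hx : IsAlgebraic ↥K x)
    (m : ℤ) (a : ℤ → Kv) (hexp : IsExpansion π Γ m a x) :
    IsKAutomatic p fun n : ℕ => a (m + n) := by
  obtain ⟨x₀, -, -, hdeg⟩ := hK.globalFunctionField
  have := hK.charP
  have := hK.complete
  let _ : Algebra (ZMod p) Kv := ZMod.algebra Kv p
  obtain ⟨G, rfl⟩ := exists_submodule_zmod_coe_eq_of_addClosed (p := p) hΓ.nonempty hadd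
  obtain ⟨ev, hev⟩ := exists_powerSeries_ringHom_hasSum (algebraMap (ZMod p) Kv)
    valuation_algebraMap_zmod_le_one hπ
  let _ : Algebra (ZMod p)⟦X⟧ Kv := ev.toAlgebra
  have : FaithfulSMul (ZMod p)⟦X⟧ Kv := faithfulSMul_powerSeries hev hπ hπ0
  let F := FractionRing (ZMod p)⟦X⟧
  let k := FractionRing (ZMod p)[X]
  let _ : Algebra F Kv := FractionRing.liftAlgebra (ZMod p)⟦X⟧ Kv
  have : FaithfulSMul (ZMod p)[X] F := .trans (ZMod p)[X] (ZMod p)⟦X⟧ F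
  let _ : Algebra k F := FractionRing.liftAlgebra (ZMod p)[X] F
  let _ : Algebra k Kv := ((algebraMap F Kv).comp (algebraMap k F)).toAlgebra
  have : IsScalarTower k F Kv := .of_algebraMap_eq' rfl
  have hx₀ : IsAlgebraic k x₀ := isAlgebraic_generator_of_isAlgebraic hev hπ0 hπ F hdeg hπalg
  exact isKAutomatic_of_isExpansion_submodule hev hπ0 hπ hΓ F hx₀ hdeg hK.dense hπalg hΓalg hx hexp
end

section
/- Let Γ = {f₁, f₂} ⊆ 𝔽_2[[z]] be a complete residue system of 𝔽_2[[z]] modulo z (equivalently, f₁ and f₂ have distinct constant terms). Then the following are equivalent: (a) f₁ and f₂ are algebraic over 𝔽_2(z); (b) for every x ∈ 𝔽_2((z)), x is algebraic over 𝔽_2(z) if and only if the digit sequence {a_n}_{n≥m} of the expansion x = ∑_{n≥m} a_n zⁿ with a_n ∈ Γ is 2-automatic. -/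
/-!
**Theorem 3.8.**  Expansions in `𝔽₂[[z]]`-digit systems: for a complete residue
system `Γ = {f₁, f₂} ⊆ 𝔽₂[[z]]` modulo `z`, property B holds for `(Γ, z)` iff
`f₁` and `f₂` are algebraic over `𝔽₂(z)`.  Here `𝔽₂((z))` is the field of formal
Laurent series over `𝔽₂` (with its `z`-adic valued topology), `z` is the
variable, and power series are coerced into Laurent series.
-/

open scoped RatFunc

/-!
If the digits lie on the line through two distinct algebraic series, `a_{m+n} = f₁ + eₙ (f₂ - f₁)`
with `eₙ` in the finite coefficient field, then `x = z^m (f₁ / (1 - z) + (f₂ - f₁) ∑ eₙ zⁿ)`. Hence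
`x` is algebraic iff `∑ eₙ zⁿ` is, and by Christol's theorem this holds iff `(eₙ)`, equivalently
`(a_{m+n})`, is automatic. Conversely, the constant expansion with digit `f` is automatic and
represents `f / (1 - z)`, so `f` is algebraic.

For Christol's theorem over a field with `q` elements, use the Cartier operators
`Λ_s : ∑ aₙ zⁿ ↦ ∑ a_{qn+s} zⁿ`, for which `f = ∑ₛ zˢ (Λ_s f)^q`. A coefficient sequence is
`q`-automatic iff its series lies in a finite set `H` stable under all `Λ_s`. Given such an `H`, the
powers `h^(qⁱ)`, `i ≤ |H|`, of any `h ∈ H` lie in the span of the `|H|` elements `g^(q^|H|)`,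
`g ∈ H`, so they are dependent and `h` is algebraic. If instead `f` is algebraic, its powers
`f^(qⁱ)` are dependent, and Cartier operators turn the dependence into
`B f = ∑_{1 ≤ i ≤ r} Cᵢ f^(qⁱ)` with `B ≠ 0`; for `N` bounding the degrees of `B` and the `Cᵢ`,
the `g` such that `B g` is a combination of the `f^(qⁱ)`, `i ≤ r`, with coefficients of degree at
most `N` form a finite stable set containing `f`.
-/

open PowerSeries
open scoped LaurentSeries

section Automatic

open Function

variable {α β : Type*} {k : ℕ}

theorem isKAutomatic_const (a : α) : IsKAutomatic k fun _ ↦ a :=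
  (Set.finite_singleton fun _ ↦ a).subset (by rintro c ⟨i, j, -, rfl⟩; rfl)

theorem isKAutomatic_comp_iff {g : α → β} (hg : Injective g) {b : ℕ → α} :
    IsKAutomatic k (fun n ↦ g (b n)) ↔ IsKAutomatic k b := by
  have kernel_comp : {c | ∃ i j, j < k ^ i ∧ c = fun n ↦ g (b (n * k ^ i + j))} =
      (g ∘ ·) '' {c | ∃ i j, j < k ^ i ∧ c = fun n ↦ b (n * k ^ i + j)} := by
    ext c
    constructor
    · rintro ⟨i, j, hj, rfl⟩
      exact ⟨_, ⟨i, j, hj, rfl⟩, rfl⟩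
    · rintro ⟨_, ⟨i, j, hj, rfl⟩, rfl⟩
      exact ⟨i, j, hj, rfl⟩
  rw [IsKAutomatic, kernel_comp, Set.finite_image_iff hg.comp_left.injOn, IsKAutomatic]

end Automatic

section Cartier

variable {R : Type*} [CommRing R]

/-- The Cartier operator `Λ_s : ∑ aₙ Xⁿ ↦ ∑ a_{kn+s} Xⁿ`, by which the `k`-kernel of a coefficient
sequence is read off as a set of power series. -/
noncomputable def cartier (k s : ℕ) : R⟦X⟧ →ₗ[R] R⟦X⟧ where
  toFun f := mk fun n ↦ coeff (k * n + s) f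
  map_add' f g := by ext; simp
  map_smul' c f := by ext; simp

@[simp]
theorem coeff_cartier (k s n : ℕ) (f : R⟦X⟧) :
    coeff n (cartier k s f) = coeff (k * n + s) f := by
  simp [cartier]

@[simp]
theorem cartier_one_zero (f : R⟦X⟧) : cartier 1 0 f = f := by
  ext; simp

theorem cartier_cartier (k l s t : ℕ) (f : R⟦X⟧) :
    cartier k s (cartier l t f) = cartier (l * k) (l * s + t) f := by
  ext n
  simp only [coeff_cartier]
  congr 2
  ring

theorem eq_sum_X_pow_mul_expand_cartier {k : ℕ} (hk : k ≠ 0) (f : R⟦X⟧) :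
    f = ∑ s ∈ Finset.range k, X ^ s * expand k hk (cartier k s f) := by
  ext n
  have coeff_summand (s : ℕ) (hs : s < k) :
      coeff n (X ^ s * expand k hk (cartier k s f)) = if n % k = s then coeff n f else 0 := by
    rw [coeff_X_pow_mul', coeff_expand, coeff_cartier]
    by_cases hsn : n % k = s
    · have hdvd : k ∣ n - s := hsn ▸ Nat.dvd_sub_mod n
      have hle : s ≤ n := hsn ▸ Nat.mod_le n k
      rw [if_pos hle, if_pos hdvd, if_pos hsn, Nat.mul_div_cancel' hdvd, Nat.sub_add_cancel hle]
    · rw [if_neg hsn, ite_eq_right_iff]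
      refine fun hle ↦ if_neg fun hdvd ↦ hsn ?_
      rw [← (Nat.modEq_iff_dvd' hle).2 hdvd, Nat.mod_eq_of_lt hs]
  rw [map_sum, Finset.sum_congr rfl fun s hs ↦ coeff_summand s (Finset.mem_range.1 hs),
    Finset.sum_ite_eq, if_pos (Finset.mem_range.2 (Nat.mod_lt n (Nat.pos_of_ne_zero hk)))]

theorem cartier_mul_expand {k s : ℕ} (hk : k ≠ 0) (hs : s < k) (f g : R⟦X⟧) :
    cartier k s (f * expand k hk g) = cartier k s f * g := by
  ext n
  rw [coeff_cartier, coeff_mul, coeff_mul]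
  symm
  refine Finset.sum_of_injOn (fun ij ↦ (k * ij.1 + s, k * ij.2)) ?_ ?_ ?_ ?_
  · rintro ⟨i, j⟩ - ⟨i', j'⟩ - h
    simpa [hk] using h
  · rintro ⟨i, j⟩ hij
    rw [Finset.mem_coe, Finset.HasAntidiagonal.mem_antidiagonal] at hij ⊢
    rw [← hij]
    ring
  · rintro ⟨i, j⟩ hij hnot
    rw [Finset.HasAntidiagonal.mem_antidiagonal] at hij
    rw [coeff_expand_of_not_dvd, mul_zero]
    rintro ⟨j', rfl⟩
    have hj' : j' ≤ n := by
      by_contra! hlt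
      have := Nat.mul_le_mul_left k hlt
      rw [Nat.mul_succ] at this
      omega
    refine hnot ⟨(n - j', j'), by simp [hj'], ?_⟩
    simp only [Prod.mk.injEq, and_true]
    have : k * (n - j') + k * j' = k * n := by rw [← mul_add, Nat.sub_add_cancel hj']
    omega
  · rintro ⟨i, j⟩ -
    simp

theorem exists_cartier_ne_zero {k : ℕ} (hk : k ≠ 0) {f : R⟦X⟧} (hf : f ≠ 0) :
    ∃ s < k, cartier k s f ≠ 0 := by
  by_contra! hzero
  refine hf ((eq_sum_X_pow_mul_expand_cartier hk f).trans (Finset.sum_eq_zero fun s hs ↦ ?_))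
  rw [hzero s (Finset.mem_range.1 hs), map_zero, mul_zero]

theorem isKAutomatic_coeff_iff_exists_finite_cartier_stable {k : ℕ} {f : R⟦X⟧} :
    IsKAutomatic k (fun n ↦ coeff n f) ↔
      ∃ H : Set R⟦X⟧, H.Finite ∧ f ∈ H ∧ ∀ g ∈ H, ∀ s < k, cartier k s g ∈ H := by
  have coeffSeq_cartier (i j : ℕ) :
      (fun n ↦ coeff n (cartier (k ^ i) j f)) = fun n ↦ coeff (n * k ^ i + j) f := by
    simp only [coeff_cartier, mul_comm]
  constructor
  · intro hf
    refine ⟨{g | ∃ i j, j < k ^ i ∧ g = cartier (k ^ i) j f}, ?_,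
      ⟨0, 0, by simp, by simp⟩, ?_⟩
    · refine hf.of_injOn (f := fun g n ↦ coeff n g) ?_
        fun g _ g' _ h ↦ PowerSeries.ext (congrFun h)
      rintro _ ⟨i, j, hj, rfl⟩
      exact ⟨i, j, hj, coeffSeq_cartier i j⟩
    · rintro _ ⟨i, j, hj, rfl⟩ s hs
      refine ⟨i + 1, k ^ i * s + j, ?_, by rw [cartier_cartier, pow_succ]⟩
      calc k ^ i * s + j < k ^ i * (s + 1) := by rw [mul_add_one]; omega
        _ ≤ k ^ (i + 1) := by rw [pow_succ]; exact Nat.mul_le_mul_left _ hs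
  · rintro ⟨H, hH, hfH, hstable⟩
    have cartier_pow_mem (i j : ℕ) (hj : j < k ^ i) : cartier (k ^ i) j f ∈ H := by
      induction i generalizing j with
      | zero =>
        obtain rfl : j = 0 := by simpa using hj
        simpa using hfH
      | succ i ih =>
        have hki : 0 < k ^ i := by
          by_contra! h0
          simp [pow_succ, Nat.le_zero.1 h0] at hj
        have := hstable _ (ih (j % k ^ i) (Nat.mod_lt _ hki)) (j / k ^ i)
          (Nat.div_lt_of_lt_mul (pow_succ k i ▸ hj))
        rwa [cartier_cartier, Nat.div_add_mod, ← pow_succ] at this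
    refine (hH.image fun g n ↦ coeff n g).subset ?_
    rintro _ ⟨i, j, hj, rfl⟩
    exact ⟨_, cartier_pow_mem i j hj, coeffSeq_cartier i j⟩

end Cartier

section PolySpan

variable {R : Type*} [CommRing R] {ι : Type*}

/-- The polynomials of degree at most `N`, as a submodule of the power series. -/
def polyDegreeLE (R : Type*) [CommRing R] (N : ℕ) : Submodule R R⟦X⟧ where
  carrier := {P | ∀ n, N < n → coeff n P = 0}
  add_mem' hP hQ n hn := by rw [map_add, hP n hn, hQ n hn, add_zero]
  zero_mem' n _ := by rw [map_zero]
  smul_mem' c P hP n hn := by rw [map_smul, hP n hn, smul_zero]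

theorem coe_mem_polyDegreeLE {P : Polynomial R} {N : ℕ} (hP : P.natDegree ≤ N) :
    (P : R⟦X⟧) ∈ polyDegreeLE R N := fun n hn ↦ by
  rw [Polynomial.coeff_coe, Polynomial.coeff_eq_zero_of_natDegree_lt (hP.trans_lt hn)]

theorem polyDegreeLE_mono : Monotone (polyDegreeLE R) :=
  fun _ _ hNM _ hP n hn ↦ hP n (hNM.trans_lt hn)

theorem mul_mem_polyDegreeLE {N M : ℕ} {P Q : R⟦X⟧} (hP : P ∈ polyDegreeLE R N)
    (hQ : Q ∈ polyDegreeLE R M) : P * Q ∈ polyDegreeLE R (N + M) := by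
  intro n hn
  rw [coeff_mul]
  refine Finset.sum_eq_zero fun ⟨i, j⟩ hij ↦ ?_
  rw [Finset.HasAntidiagonal.mem_antidiagonal] at hij
  rcases lt_or_ge N i with hi | hi
  · rw [hP i hi, zero_mul]
  · rw [hQ j (by omega), mul_zero]

theorem pow_mem_polyDegreeLE {N : ℕ} {P : R⟦X⟧} (hP : P ∈ polyDegreeLE R N) (m : ℕ) :
    P ^ m ∈ polyDegreeLE R (m * N) := by
  induction m with
  | zero => simpa using coe_mem_polyDegreeLE (P := (1 : Polynomial R)) (N := 0) (by simp)
  | succ m ih => rw [pow_succ, Nat.succ_mul]; exact mul_mem_polyDegreeLE ih hP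

theorem cartier_mem_polyDegreeLE {k N : ℕ} (hk : k ≠ 0) (s : ℕ) {P : R⟦X⟧}
    (hP : P ∈ polyDegreeLE R (k * N)) : cartier k s P ∈ polyDegreeLE R N := fun n hn ↦ by
  rw [coeff_cartier]
  exact hP _ (((Nat.mul_lt_mul_left (Nat.pos_of_ne_zero hk)).2 hn).trans_le (Nat.le_add_right _ _))

instance finite_polyDegreeLE [Finite R] (N : ℕ) : Finite (polyDegreeLE R N) := by
  refine Finite.of_injective
    (fun (P : polyDegreeLE R N) (i : Fin (N + 1)) ↦ coeff i P.1) fun P Q h ↦ ?_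
  ext n
  rcases lt_or_ge N n with hn | hn
  · rw [P.2 n hn, Q.2 n hn]
  · exact congrFun h ⟨n, Nat.lt_succ_of_le hn⟩

/-- The combinations `∑ᵢ Dᵢ vᵢ` of power series `vᵢ` with polynomial coefficients `Dᵢ` of degree at
most `N`. -/
noncomputable def polySpan (N : ℕ) (v : ι → R⟦X⟧) : Submodule R R⟦X⟧ :=
  ⨆ i, (polyDegreeLE R N).map (LinearMap.mulRight R (v i))

theorem mul_mem_polySpan {N : ℕ} (v : ι → R⟦X⟧) (i : ι) {D : R⟦X⟧} (hD : D ∈ polyDegreeLE R N) :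
    D * v i ∈ polySpan N v :=
  Submodule.mem_iSup_of_mem i ⟨D, hD, rfl⟩

theorem polySpan_le_iff {N : ℕ} {v : ι → R⟦X⟧} {W : Submodule R R⟦X⟧} :
    polySpan N v ≤ W ↔ ∀ i, ∀ D ∈ polyDegreeLE R N, D * v i ∈ W := by
  simp only [polySpan, iSup_le_iff, Submodule.map_le_iff_le_comap]
  rfl

theorem polySpan_mono (v : ι → R⟦X⟧) : Monotone fun N ↦ polySpan N v :=
  fun _ _ hNM ↦ polySpan_le_iff.2 fun i _ hD ↦ mul_mem_polySpan v i (polyDegreeLE_mono hNM hD)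

theorem polySpan_comp_le {κ : Type*} (N : ℕ) (v : ι → R⟦X⟧) (e : κ → ι) :
    polySpan N (fun i ↦ v (e i)) ≤ polySpan N v :=
  polySpan_le_iff.2 fun i _ hD ↦ mul_mem_polySpan v (e i) hD

theorem mul_mem_polySpan_add {N M : ℕ} {v : ι → R⟦X⟧} {P g : R⟦X⟧} (hP : P ∈ polyDegreeLE R M)
    (hg : g ∈ polySpan N v) : P * g ∈ polySpan (M + N) v := by
  have hle : polySpan N v ≤ (polySpan (M + N) v).comap (LinearMap.mulLeft R P) :=
    polySpan_le_iff.2 fun i D hD ↦ by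
      rw [Submodule.mem_comap, LinearMap.mulLeft_apply, ← mul_assoc]
      exact mul_mem_polySpan v i (mul_mem_polyDegreeLE hP hD)
  exact hle hg

theorem cartier_mem_polySpan {k s N : ℕ} (hk : k ≠ 0) (hs : s < k) {v : ι → R⟦X⟧} {g : R⟦X⟧}
    (hg : g ∈ polySpan (k * N) fun i ↦ expand k hk (v i)) : cartier k s g ∈ polySpan N v := by
  have hle : polySpan (k * N) (fun i ↦ expand k hk (v i)) ≤ (polySpan N v).comap (cartier k s) :=
    polySpan_le_iff.2 fun i D hD ↦ by
      rw [Submodule.mem_comap, cartier_mul_expand hk hs]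
      exact mul_mem_polySpan v i (cartier_mem_polyDegreeLE hk s hD)
  exact hle hg

theorem finite_polySpan [Finite R] [Finite ι] (N : ℕ) (v : ι → R⟦X⟧) :
    (polySpan N v : Set R⟦X⟧).Finite := by
  have : Module.Finite R (polySpan N v) := by unfold polySpan; infer_instance
  have : Finite (polySpan N v) := Module.finite_of_finite R
  exact Set.toFinite _

end PolySpan

section Powers

variable {F A : Type*} [Field F] [CommRing A] [Algebra F A]

theorem linearIndependent_pow_comp_iff_transcendental {ι : Type*} [Infinite ι] {e : ι → ℕ}
    (he : Function.Injective e) {x : A} :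
    LinearIndependent F (fun i ↦ x ^ e i) ↔ Transcendental F x := by
  constructor
  · intro hli hx
    have : Module.Finite F (Algebra.adjoin F {x}) :=
      Algebra.finite_adjoin_simple_of_isIntegral hx.isIntegral
    let y : Algebra.adjoin F {x} := ⟨x, Algebra.self_mem_adjoin_singleton F x⟩
    have hli_adjoin : LinearIndependent F fun i ↦ y ^ e i :=
      LinearIndependent.of_comp (Algebra.adjoin F {x}).val.toLinearMap hli
    have := hli_adjoin.finite
    exact not_finite ι
  · intro hx
    have hmonomials := ((Polynomial.basisMonomials F).linearIndependent.comp e he).map'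
      (Polynomial.aeval x).toLinearMap (LinearMap.ker_eq_bot.2 (transcendental_iff_injective.1 hx))
    simpa [Function.comp_def, Polynomial.aeval_monomial] using hmonomials

end Powers

section FiniteField

variable {K : Type*} [Field K] [Fintype K]

local notation "q" => Fintype.card K

section FrobeniusSpan

variable {F A : Type*} [Field F] [CommRing A] [Algebra F A] [Algebra K A]

variable (K) in
theorem pow_card_mem_span_image {S : Set A} {x : A} (hx : x ∈ Submodule.span F S) :
    x ^ q ∈ Submodule.span F ((· ^ q) '' S) := by
  induction hx using Submodule.span_induction with
  | mem x hx => exact Submodule.subset_span ⟨x, hx, rfl⟩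
  | zero => simp [zero_pow Fintype.card_ne_zero]
  | add x y _ _ hx hy =>
    have hadd : (x + y) ^ q = x ^ q + y ^ q := map_add (FiniteField.frobeniusAlgHom K A) x y
    exact hadd ▸ add_mem hx hy
  | smul c x _ hx => exact smul_pow c x q ▸ Submodule.smul_mem _ _ hx

variable (K) in
theorem pow_card_pow_mem_span_image {H : Set A}
    (hH : ∀ h ∈ H, h ∈ Submodule.span F ((· ^ q) '' H)) {h : A} (hh : h ∈ H) {i d : ℕ}
    (hid : i ≤ d) : h ^ q ^ i ∈ Submodule.span F ((· ^ q ^ d) '' H) := by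
  have span_image_pow_mono : Monotone fun d ↦ Submodule.span F ((· ^ q ^ d) '' H) := by
    refine monotone_nat_of_le_succ fun d ↦ Submodule.span_le.2 ?_
    rintro _ ⟨g, hg, rfl⟩
    induction d with
    | zero => simpa using hH g hg
    | succ d ih =>
      have := pow_card_mem_span_image K ih
      simpa only [SetLike.mem_coe, Set.image_image, ← pow_mul, ← pow_succ] using this
  exact span_image_pow_mono hid (Submodule.subset_span ⟨h, hh, rfl⟩)

variable (K) in
theorem isAlgebraic_of_mem_span_image_pow_card {H : Set A} (hfin : H.Finite)
    (hH : ∀ h ∈ H, h ∈ Submodule.span F ((· ^ q) '' H)) {h : A} (hh : h ∈ H) :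
    IsAlgebraic F h := by
  by_contra htrans
  have hli : LinearIndependent F fun i : ℕ ↦ h ^ q ^ i :=
    (linearIndependent_pow_comp_iff_transcendental
      (Nat.pow_right_injective Fintype.one_lt_card)).2 htrans
  classical
  lift H to Finset A using hfin
  -- The `|H| + 1` independent powers `h ^ q ^ i`, `i ≤ |H|`, lie in a span of `|H|` elements.
  have hspan : Set.range (fun i : Fin (H.card + 1) ↦ h ^ q ^ (i : ℕ)) ≤
      Submodule.span F (H.image (· ^ q ^ H.card) : Set A) := by
    rintro _ ⟨i, rfl⟩
    rw [Finset.coe_image]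
    exact pow_card_pow_mem_span_image K hH hh (Nat.le_of_lt_succ i.2)
  have hcard : H.card + 1 ≤ (H.image (· ^ q ^ H.card)).card := by
    simpa using linearIndependent_le_span' _ (hli.comp _ Fin.val_injective) _ hspan
  exact (hcard.trans Finset.card_image_le).not_gt H.card.lt_succ_self

end FrobeniusSpan

theorem expand_card_eq_pow (f : K⟦X⟧) : expand q Fintype.card_ne_zero f = f ^ q := by
  ext n
  have htrunc : coeff n (f ^ q) = (trunc (n + 1) f ^ q).coeff n := by
    rw [← coeff_coe_trunc_of_lt n.lt_succ_self, ← trunc_trunc_pow,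
      coeff_coe_trunc_of_lt n.lt_succ_self, ← Polynomial.coe_pow, Polynomial.coeff_coe]
  rw [htrunc, ← FiniteField.expand_card, Polynomial.coeff_expand Fintype.card_pos, coeff_expand]
  refine if_congr Iff.rfl ?_ rfl
  rw [coeff_trunc, if_pos (Nat.lt_succ_of_le (Nat.div_le_self n q))]

theorem eq_sum_X_pow_mul_cartier_pow_card (f : K⟦X⟧) :
    f = ∑ s ∈ Finset.range q, X ^ s * cartier q s f ^ q := by
  simpa only [expand_card_eq_pow] using
    eq_sum_X_pow_mul_expand_cartier (Fintype.card_ne_zero (α := K)) f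

theorem cartier_mul_pow_card {s : ℕ} (hs : s < q) (f g : K⟦X⟧) :
    cartier q s (f * g ^ q) = cartier q s f * g := by
  rw [← expand_card_eq_pow, cartier_mul_expand Fintype.card_ne_zero hs]

theorem cartier_mem_polySpan_of_pow_card {ι : Type*} {s N : ℕ} (hs : s < q) {v : ι → K⟦X⟧}
    {g : K⟦X⟧} (hg : g ∈ polySpan (q * N) fun i ↦ v i ^ q) : cartier q s g ∈ polySpan N v := by
  simp only [← expand_card_eq_pow] at hg
  exact cartier_mem_polySpan Fintype.card_ne_zero hs hg

theorem isAlgebraic_of_mem_cartier_stable {H : Set K⟦X⟧} (hfin : H.Finite)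
    (hstable : ∀ g ∈ H, ∀ s < q, cartier q s g ∈ H) {f : K⟦X⟧} (hf : f ∈ H) :
    IsAlgebraic K⟮X⟯ (f : K⸨X⸩) := by
  refine isAlgebraic_of_mem_span_image_pow_card K (hfin.image (HahnSeries.ofPowerSeries ℤ K)) ?_
    ⟨f, hf, rfl⟩
  rintro _ ⟨g, hg, rfl⟩
  rw [eq_sum_X_pow_mul_cartier_pow_card g, map_sum]
  refine sum_mem fun s hs ↦ ?_
  have hsmul : ((X ^ s * cartier q s g ^ q : K⟦X⟧) : K⸨X⸩) =
      (RatFunc.X ^ s : K⟮X⟯) • (cartier q s g : K⸨X⸩) ^ q := by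
    rw [Algebra.smul_def, map_pow, RatFunc.coe_X, ← coe_X, map_mul, map_pow, map_pow]
  rw [hsmul]
  exact Submodule.smul_mem _ _ (Submodule.subset_span
    ⟨_, ⟨_, hstable g hg s (Finset.mem_range.1 hs), rfl⟩, rfl⟩)

/-- `f` satisfies a relation `B f = ∑ᵢ Cᵢ f ^ qⁱ` (a finite sum over `i ≥ 1`) with polynomial
coefficients and `B ≠ 0`; the degree bound `N` and the length `r` are existentially quantified. -/
def HasOreRelation (f : K⟦X⟧) : Prop :=
  ∃ r N : ℕ, ∃ B ∈ polyDegreeLE K N, B ≠ 0 ∧ B * f ∈ polySpan N fun i : Fin r ↦ f ^ q ^ (i + 1 : ℕ)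

theorem HasOreRelation.of_pow_card {f : K⟦X⟧} (h : HasOreRelation (f ^ q)) :
    HasOreRelation f := by
  obtain ⟨r, N, B, hBN, hB, hBf⟩ := h
  obtain ⟨s, hs, hBs⟩ := exists_cartier_ne_zero (Fintype.card_ne_zero (α := K)) hB
  have hN : N ≤ q * N := Nat.le_mul_of_pos_left N Fintype.card_pos
  refine ⟨r, N, cartier q s B,
    cartier_mem_polyDegreeLE Fintype.card_ne_zero s (polyDegreeLE_mono hN hBN), hBs, ?_⟩
  rw [← cartier_mul_pow_card hs]
  refine cartier_mem_polySpan_of_pow_card hs (polySpan_mono _ hN ?_)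
  simpa only [← pow_mul, mul_comm] using hBf

theorem HasOreRelation.of_pow_card_pow {f : K⟦X⟧} (j : ℕ) (h : HasOreRelation (f ^ q ^ j)) :
    HasOreRelation f := by
  induction j with
  | zero => simpa using h
  | succ j ih => exact ih (.of_pow_card (by rwa [← pow_mul, ← pow_succ]))

theorem exists_sum_mul_pow_eq_zero_of_isAlgebraic {f : K⟦X⟧} (hf : IsAlgebraic K⟮X⟯ (f : K⸨X⸩)) :
    ∃ l : ℕ →₀ Polynomial K, l ≠ 0 ∧ ∑ i ∈ l.support, (l i : K⟦X⟧) * f ^ q ^ i = 0 := by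
  have hdep : ¬ LinearIndependent K⟮X⟯ fun i : ℕ ↦ (f : K⸨X⸩) ^ q ^ i := by
    rw [linearIndependent_pow_comp_iff_transcendental
      (Nat.pow_right_injective Fintype.one_lt_card)]
    exact not_not.2 hf
  rw [← LinearIndependent.iff_fractionRing (Polynomial K), linearIndependent_iff] at hdep
  push Not at hdep
  obtain ⟨l, hsum, hl⟩ := hdep
  refine ⟨l, hl, HahnSeries.ofPowerSeries_injective (Γ := ℤ) ?_⟩
  rw [map_zero, ← hsum, Finsupp.linearCombination_apply, Finsupp.sum, map_sum]
  refine Finset.sum_congr rfl fun i _ ↦ ?_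
  rw [map_mul, map_pow, Algebra.smul_def]
  rfl

theorem hasOreRelation_of_isAlgebraic {f : K⟦X⟧} (hf : IsAlgebraic K⟮X⟯ (f : K⸨X⸩)) :
    HasOreRelation f := by
  obtain ⟨l, hl, hsum⟩ := exists_sum_mul_pow_eq_zero_of_isAlgebraic hf
  have hne : l.support.Nonempty := Finsupp.support_nonempty_iff.2 hl
  let j := l.support.min' hne
  have hj : j ∈ l.support := l.support.min'_mem hne
  let N := l.support.sup fun i ↦ (l i).natDegree
  have coeff_mem {i : ℕ} (hi : i ∈ l.support) : (l i : K⟦X⟧) ∈ polyDegreeLE K N :=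
    coe_mem_polyDegreeLE (Finset.le_sup (f := fun i ↦ (l i).natDegree) hi)
  refine .of_pow_card_pow j ⟨l.support.sup id, N, l j, coeff_mem hj, ?_, ?_⟩
  · simpa using hj
  rw [← Finset.add_sum_erase _ _ hj, add_eq_zero_iff_eq_neg] at hsum
  rw [hsum]
  refine neg_mem (sum_mem fun i hi ↦ ?_)
  obtain ⟨hij, hi⟩ := Finset.mem_erase.1 hi
  have hji : j < i := lt_of_le_of_ne (l.support.min'_le i hi) hij.symm
  have hisup : i ≤ l.support.sup id := Finset.le_sup (f := id) hi
  convert mul_mem_polySpan (fun m : Fin (l.support.sup id) ↦ (f ^ q ^ j) ^ q ^ (m + 1 : ℕ))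
    ⟨i - j - 1, by omega⟩ (coeff_mem hi) using 2
  rw [← pow_mul, ← pow_add]
  congr 2
  dsimp only
  omega

theorem pow_card_mul_mem_polySpan {f B h : K⟦X⟧} {r N : ℕ} (hB : B ∈ polyDegreeLE K N)
    (hBf : B * f ∈ polySpan N fun i : Fin r ↦ f ^ q ^ (i + 1 : ℕ))
    (hBh : B * h ∈ polySpan N fun i : Fin (r + 1) ↦ f ^ q ^ (i : ℕ)) :
    h * B ^ q ∈ polySpan (q * N) fun i : Fin r ↦ f ^ q ^ (i + 1 : ℕ) := by
  obtain ⟨m, hm⟩ : ∃ m, q = m + 2 := ⟨q - 2, (Nat.sub_add_cancel Fintype.one_lt_card).symm⟩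
  have hle : (polySpan N fun i : Fin (r + 1) ↦ f ^ q ^ (i : ℕ)) ≤
      (polySpan (q * N) fun i : Fin r ↦ f ^ q ^ (i + 1 : ℕ)).comap
        (LinearMap.mulLeft K (B ^ (m + 1))) := by
    refine polySpan_le_iff.2 fun i D hD ↦ ?_
    rw [Submodule.mem_comap, LinearMap.mulLeft_apply]
    cases i using Fin.cases with
    | zero =>
      -- A factor `B` of `B ^ (m + 1)` is spent on rewriting `B * f` through higher powers of `f`.
      convert mul_mem_polySpan_add (mul_mem_polyDegreeLE (pow_mem_polyDegreeLE hB m) hD) hBf using 1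
      · rw [hm]; congr 1; ring
      · simp only [Fin.val_zero, pow_zero, pow_one]; ring
    | succ i =>
      convert mul_mem_polySpan (fun i : Fin r ↦ f ^ q ^ (i + 1 : ℕ)) i
        (mul_mem_polyDegreeLE (pow_mem_polyDegreeLE hB (m + 1)) hD) using 1
      · rw [hm]; congr 1; ring
      · simp only [Fin.val_succ]; ring
  have hpow : h * B ^ q = B ^ (m + 1) * (B * h) := by
    rw [hm]
    ring
  exact hpow ▸ hle hBh

theorem HasOreRelation.exists_finite_cartier_stable {f : K⟦X⟧} (h : HasOreRelation f) :
    ∃ H : Set K⟦X⟧, H.Finite ∧ f ∈ H ∧ ∀ g ∈ H, ∀ s < q, cartier q s g ∈ H := by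
  obtain ⟨r, N, B, hBN, hB, hBf⟩ := h
  let V : Submodule K K⟦X⟧ := polySpan N fun i : Fin (r + 1) ↦ f ^ q ^ (i : ℕ)
  refine ⟨{g | B * g ∈ V}, ?_, ?_, fun g hg s hs ↦ ?_⟩
  · exact (finite_polySpan N _).preimage (mul_right_injective₀ hB).injOn
  · simpa using mul_mem_polySpan (fun i : Fin (r + 1) ↦ f ^ q ^ (i : ℕ)) 0 hBN
  · have hcartier : cartier q s g * B ∈ polySpan N fun i : Fin r ↦ f ^ q ^ (i : ℕ) := by
      rw [← cartier_mul_pow_card hs]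
      refine cartier_mem_polySpan_of_pow_card hs ?_
      simpa only [← pow_mul, ← pow_succ] using pow_card_mul_mem_polySpan hBN hBf hg
    rw [mul_comm] at hcartier
    exact polySpan_comp_le N (fun i : Fin (r + 1) ↦ f ^ q ^ (i : ℕ)) Fin.castSucc hcartier

/-- Christol's theorem. -/
theorem isAlgebraic_iff_isKAutomatic_coeff {f : K⟦X⟧} :
    IsAlgebraic K⟮X⟯ (f : K⸨X⸩) ↔ IsKAutomatic q fun n ↦ coeff n f := by
  rw [isKAutomatic_coeff_iff_exists_finite_cartier_stable]
  constructor
  · exact fun hf ↦ (hasOreRelation_of_isAlgebraic hf).exists_finite_cartier_stable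
  · rintro ⟨H, hfin, hfH, hstable⟩
    exact isAlgebraic_of_mem_cartier_stable hfin hstable hfH

end FiniteField

section LaurentSeries

open Filter
open scoped Topology

variable {K : Type*} [Field K]

theorem tendsto_nhds_of_eventually_coeff_eq {ι : Type*} {l : Filter ι} {u : ι → K⸨X⸩} {x : K⸨X⸩}
    (hu : ∀ D : ℤ, ∀ᶠ i in l, ∀ n < D, (u i).coeff n = x.coeff n) : Tendsto u l (𝓝 x) := by
  refine tendsto_iff_forall_eventually_mem.2 fun U hU ↦ ?_
  obtain ⟨γ, hγU⟩ := Valued.mem_nhds.1 hU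
  let D : ℤ := 1 - WithZero.log (MonoidWithZeroHom.ValueGroup₀.embedding γ.1)
  have hD : WithZero.exp (-D) < MonoidWithZeroHom.ValueGroup₀.embedding γ.1 := by
    rw [← WithZero.lt_log_iff_exp_lt (by simp)]
    omega
  filter_upwards [hu D] with i hi
  refine hγU ?_
  rw [Set.mem_ofPred_eq, Valued.v.restrict_lt_iff_lt_embedding]
  refine lt_of_le_of_lt ((LaurentSeries.valuation_le_iff_coeff_lt_eq_zero _).2 fun n hn ↦ ?_) hD
  rw [HahnSeries.coeff_sub, hi n hn, sub_self]

theorem hasSum_single_coeff (f : K⟦X⟧) :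
    HasSum (fun n : ℕ ↦ (HahnSeries.single (n : ℤ) (coeff n f) : K⸨X⸩)) (f : K⸨X⸩) := by
  rw [HasSum, SummationFilter.unconditional_filter]
  refine tendsto_nhds_of_eventually_coeff_eq fun D ↦ ?_
  filter_upwards [eventually_ge_atTop (Finset.range D.toNat)] with t ht n hn
  rw [HahnSeries.coeff_sum, coeff_coe]
  split_ifs with hn0
  · exact Finset.sum_eq_zero fun i _ ↦ HahnSeries.coeff_single_of_ne (by omega)
  · lift n to ℕ using not_lt.1 hn0
    rw [Finset.sum_eq_single_of_mem n (ht (Finset.mem_range.2 (by omega)))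
      fun i _ hi ↦ HahnSeries.coeff_single_of_ne (by exact_mod_cast hi.symm)]
    simp

theorem hasSum_lineMap_mul_zpow (f₁ f₂ : K⟦X⟧) (m : ℤ) (e : ℕ → K) :
    HasSum (fun n : ℕ ↦ ((AffineMap.lineMap f₁ f₂ (e n) : K⟦X⟧) : K⸨X⸩) *
        HahnSeries.single (1 : ℤ) (1 : K) ^ (m + (n : ℤ)))
      (HahnSeries.single (1 : ℤ) (1 : K) ^ m *
        ((f₁ : K⸨X⸩) * (mk 1 : K⟦X⟧) + ((f₂ - f₁ : K⟦X⟧) : K⸨X⸩) * (mk e : K⟦X⟧))) := by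
  refine ((((hasSum_single_coeff (mk 1)).mul_left (f₁ : K⸨X⸩)).add
    ((hasSum_single_coeff (mk e)).mul_left ((f₂ - f₁ : K⟦X⟧) : K⸨X⸩))).mul_left
      (HahnSeries.single (1 : ℤ) (1 : K) ^ m)).congr_fun fun n ↦ ?_
  have hsingle : (HahnSeries.single (n : ℤ) (e n) : K⸨X⸩) =
      HahnSeries.C (e n) * HahnSeries.single (1 : ℤ) (1 : K) ^ n := by
    rw [← RatFunc.single_one_eq_pow, HahnSeries.C_apply, HahnSeries.single_mul_single, zero_add,
      mul_one]
  have hline : ((AffineMap.lineMap f₁ f₂ (e n) : K⟦X⟧) : K⸨X⸩) =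
      HahnSeries.C (e n) * ((f₂ - f₁ : K⟦X⟧) : K⸨X⸩) + (f₁ : K⸨X⸩) := by
    rw [AffineMap.lineMap_apply_module', coe_add, coe_smul, HahnSeries.C_mul_eq_smul]
  rw [coeff_mk, coeff_mk, hsingle, hline, Pi.one_apply, RatFunc.single_one_eq_pow,
    zpow_add₀ (by simp), zpow_natCast]
  ring

variable (K) in
theorem isAlgebraic_single_one_zpow (m : ℤ) :
    IsAlgebraic K⟮X⟯ ((HahnSeries.single (1 : ℤ) (1 : K) : K⸨X⸩) ^ m) := by
  rw [← RatFunc.coe_X, ← map_zpow₀]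
  exact isAlgebraic_algebraMap _

variable (K) in
theorem isAlgebraic_mk_one : IsAlgebraic K⟮X⟯ ((mk 1 : K⟦X⟧) : K⸨X⸩) := by
  have hinv : ((mk 1 : K⟦X⟧) : K⸨X⸩) = (1 - HahnSeries.single (1 : ℤ) (1 : K))⁻¹ := by
    refine eq_inv_of_mul_eq_one_left ?_
    rw [← coe_X, ← coe_one, ← coe_sub, ← coe_mul, mk_one_mul_one_sub_eq_one]
  rw [hinv]
  simpa using (isAlgebraic_one.sub (isAlgebraic_single_one_zpow K 1)).inv

theorem coe_mk_one_ne_zero : ((mk 1 : K⟦X⟧) : K⸨X⸩) ≠ 0 := by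
  have h := left_ne_zero_of_mul_eq_one (mk_one_mul_one_sub_eq_one K)
  exact (map_ne_zero_iff _ HahnSeries.ofPowerSeries_injective).2 h

end LaurentSeries

section IsAlgebraic

variable {R A : Type*} [CommRing R] [NoZeroDivisors R] [CommRing A] [Algebra R A] {u y : A}

theorem isAlgebraic_mul_iff_right [NoZeroDivisors A] (hu : IsAlgebraic R u) (h0 : u ≠ 0) :
    IsAlgebraic R (u * y) ↔ IsAlgebraic R y :=
  ⟨.of_mul (mem_nonZeroDivisors_of_ne_zero h0) hu, hu.mul⟩

theorem isAlgebraic_add_iff_right (hu : IsAlgebraic R u) :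
    IsAlgebraic R (u + y) ↔ IsAlgebraic R y :=
  ⟨fun h ↦ add_sub_cancel_left u y ▸ h.sub hu, hu.add⟩

end IsAlgebraic

section Digits

variable {K : Type*} [Field K]

theorem exists_isAlgebraic_forall_mem_range_lineMap {Γ : Set K⟦X⟧} (hΓ : Collinear K Γ)
    (hΓalg : ∀ f ∈ Γ, IsAlgebraic K⟮X⟯ (f : K⸨X⸩)) :
    ∃ f₁ f₂ : K⟦X⟧, f₁ ≠ f₂ ∧ IsAlgebraic K⟮X⟯ (f₁ : K⸨X⸩) ∧ IsAlgebraic K⟮X⟯ (f₂ : K⸨X⸩) ∧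
      ∀ f ∈ Γ, ∃ r : K, AffineMap.lineMap f₁ f₂ r = f := by
  rcases Γ.subsingleton_or_nontrivial with hsub | ⟨f₁, hf₁, f₂, hf₂, hne⟩
  · obtain rfl | ⟨f, rfl⟩ := hsub.eq_empty_or_singleton
    · exact ⟨0, 1, zero_ne_one, by simpa using isAlgebraic_zero, by simpa using isAlgebraic_one,
        by simp⟩
    · have hf := hΓalg f rfl
      exact ⟨f, f + 1, by simp, hf, by simpa using hf.add isAlgebraic_one, by simp⟩
  · exact ⟨f₁, f₂, hne, hΓalg f₁ hf₁, hΓalg f₂ hf₂, fun f hf ↦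
      mem_affineSpan_pair_iff_exists_lineMap_eq.1 (hΓ.mem_affineSpan_of_mem_of_ne hf₁ hf₂ hf hne)⟩

variable [Fintype K]

theorem isAlgebraic_iff_isKAutomatic_lineMap {f₁ f₂ : K⟦X⟧} (hne : f₁ ≠ f₂)
    (hf₁ : IsAlgebraic K⟮X⟯ (f₁ : K⸨X⸩)) (hf₂ : IsAlgebraic K⟮X⟯ (f₂ : K⸨X⸩)) {m : ℤ} {e : ℕ → K}
    {x : K⸨X⸩} (hx : HasSum (fun n : ℕ ↦ ((AffineMap.lineMap f₁ f₂ (e n) : K⟦X⟧) : K⸨X⸩) *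
      HahnSeries.single (1 : ℤ) (1 : K) ^ (m + (n : ℤ))) x) :
    IsAlgebraic K⟮X⟯ x ↔
      IsKAutomatic (Fintype.card K) fun n ↦ (AffineMap.lineMap f₁ f₂ (e n) : K⟦X⟧) := by
  have hsub : ((f₂ - f₁ : K⟦X⟧) : K⸨X⸩) ≠ 0 :=
    (map_ne_zero_iff _ HahnSeries.ofPowerSeries_injective).2 (sub_ne_zero.2 hne.symm)
  have hsubalg : IsAlgebraic K⟮X⟯ ((f₂ - f₁ : K⟦X⟧) : K⸨X⸩) := coe_sub f₂ f₁ ▸ hf₂.sub hf₁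
  rw [hx.unique (hasSum_lineMap_mul_zpow f₁ f₂ m e),
    isAlgebraic_mul_iff_right (isAlgebraic_single_one_zpow K m) (zpow_ne_zero m (by simp)),
    isAlgebraic_add_iff_right (hf₁.mul (isAlgebraic_mk_one K)),
    isAlgebraic_mul_iff_right hsubalg hsub, isAlgebraic_iff_isKAutomatic_coeff,
    isKAutomatic_comp_iff (AffineMap.lineMap_injective K hne)]
  simp only [coeff_mk]

theorem propertyB_for_two_element_digit_sets_general {Γ : Set K⟦X⟧} (hΓ : Collinear K Γ) :
    (∀ f ∈ Γ, IsAlgebraic K⟮X⟯ (f : K⸨X⸩)) ↔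
      ∀ (x : K⸨X⸩) (m : ℤ) (a : ℤ → K⟦X⟧), (∀ n : ℤ, m ≤ n → a n ∈ Γ) →
        HasSum (fun n : ℕ ↦
          (a (m + n) : K⸨X⸩) * (HahnSeries.single (1 : ℤ) (1 : K)) ^ (m + (n : ℤ))) x →
        (IsAlgebraic K⟮X⟯ x ↔ IsKAutomatic (Fintype.card K) fun n : ℕ ↦ a (m + n)) := by
  constructor
  · intro hΓalg x m a ha hx
    obtain ⟨f₁, f₂, hne, hf₁, hf₂, hline⟩ := exists_isAlgebraic_forall_mem_range_lineMap hΓ hΓalg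
    choose e he using fun n : ℕ ↦ hline _ (ha (m + n) (by omega))
    simp only [← he] at hx ⊢
    exact isAlgebraic_iff_isKAutomatic_lineMap hne hf₁ hf₂ hx
  · intro hB f hf
    have hconst := hasSum_lineMap_mul_zpow f f 0 0
    simp only [AffineMap.lineMap_same_apply, sub_self, map_zero, zero_mul, add_zero, zpow_zero,
      one_mul] at hconst
    have halg := (hB _ 0 (fun _ ↦ f) (fun _ _ ↦ hf) hconst).2 (isKAutomatic_const f)
    rwa [mul_comm, isAlgebraic_mul_iff_right (isAlgebraic_mk_one K) coe_mk_one_ne_zero] at halg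

end Digits

/-- **Theorem 3.8.** Let `Γ = {f₁, f₂} ⊆ 𝔽₂[[z]]` be a complete residue system of
`𝔽₂[[z]]` modulo `z` (i.e. `f₁, f₂` have distinct constant terms).  Then `f₁`
and `f₂` are algebraic over `𝔽₂(z)` if and only if: for every `x ∈ 𝔽₂((z))`
with expansion `x = ∑_{n ≥ m} a_n zⁿ`, `a_n ∈ Γ`, `x` is algebraic over `𝔽₂(z)`
iff the digit sequence `{a_n}_{n ≥ m}` is `2`-automatic. -/
theorem propertyB_for_two_element_digit_sets
    (f₁ f₂ : PowerSeries (ZMod 2))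
    (hres : PowerSeries.constantCoeff (R := ZMod 2) f₁ ≠ PowerSeries.constantCoeff (R := ZMod 2) f₂) :
    (IsAlgebraic (RatFunc (ZMod 2)) (f₁ : LaurentSeries (ZMod 2)) ∧
        IsAlgebraic (RatFunc (ZMod 2)) (f₂ : LaurentSeries (ZMod 2))) ↔
      ∀ (x : LaurentSeries (ZMod 2)) (m : ℤ) (a : ℤ → PowerSeries (ZMod 2)),
        (∀ n : ℤ, m ≤ n → a n = f₁ ∨ a n = f₂) →
        HasSum (fun n : ℕ =>
          (a (m + n) : LaurentSeries (ZMod 2)) *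
            (HahnSeries.single (1 : ℤ) (1 : ZMod 2)) ^ (m + (n : ℤ))) x →
        (IsAlgebraic (RatFunc (ZMod 2)) x ↔ IsKAutomatic 2 fun n : ℕ => a (m + n)) := by
  simpa [ZMod.card] using
    propertyB_for_two_element_digit_sets_general (collinear_pair (ZMod 2) f₁ f₂)
end
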